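/- Let H be a graph and 𝔠 a partition of E(H) into matchings such that the union of any two matchings in 𝔠 is a connected edge set. Then for every transversal T of 𝔠 there exists a family of connected, pairwise disjoint, pairwise incident edge sets of H traversed by T. -/

import Mathlib

/-- A multigraph (possibly with parallel edges, but loopless): each edge `e` has a
pair of distinct endpoints `ends e`. -/
structure Multigraph (V E : Type*) where
  ends : E → Sym2 V
  not_isDiag : ∀ e, ¬ (ends e).IsDiag

namespace Multigraph

variable {V E : Type*} (G : Multigraph V E)

/-- A matching: a set of pairwise non-incident edges. -/
def Matching (M : Set E) : Prop :=
  ∀ e ∈ M, ∀ f ∈ M, e ≠ f → ¬ ∃ v : V, v ∈ G.ends e ∧ v ∈ G.ends f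

/-- An edge set `F` is connected if it is nonempty and any two of its edges are
linked by a chain of edges of `F`, consecutive ones sharing an endpoint. -/
def EdgesConnected (F : Set E) : Prop :=
  F.Nonempty ∧ ∀ e ∈ F, ∀ f ∈ F,
    Relation.ReflTransGen
      (fun a b => a ∈ F ∧ b ∈ F ∧ ∃ v : V, v ∈ G.ends a ∧ v ∈ G.ends b) e f

/-- Two edge sets are incident if some edge of one shares an endpoint with some
edge of the other. -/
def EdgesIncident (F F' : Set E) : Prop :=
  ∃ e ∈ F, ∃ f ∈ F', ∃ v : V, v ∈ G.ends e ∧ v ∈ G.ends f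

end Multigraph

/-- `𝔠` is a partition of a set into nonempty, pairwise disjoint classes covering
everything. -/
def IsEdgePartition {E : Type*} (𝔠 : Set (Set E)) : Prop :=
  (∀ M ∈ 𝔠, M.Nonempty) ∧ (⋃₀ 𝔠 = Set.univ) ∧
  (∀ M ∈ 𝔠, ∀ N ∈ 𝔠, M ≠ N → Disjoint M N)

/-- The family `𝔎` of pairwise disjoint sets is traversed by `T`. -/
def TraversedBy {α : Type*} (𝔎 : Set (Set α)) (T : Set α) : Prop :=
  (∀ A ∈ 𝔎, ∃! e, e ∈ T ∧ e ∈ A) ∧ ∀ e ∈ T, ∃ A ∈ 𝔎, e ∈ A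

open Relation

theorem rtg_mono {E : Type*} {R R' : E → E → Prop} (h : ∀ a b, R a b → R' a b) {e f : E}
    (hef : ReflTransGen R e f) : ReflTransGen R' e f :=
  ReflTransGen.mono h _ _ hef

def KConn {E : Type*} (R : E → E → Prop) (F : Set E) : Prop :=
  ∀ e ∈ F, ∀ f ∈ F, ReflTransGen (fun a b => a ∈ F ∧ b ∈ F ∧ R a b) e f

theorem KConn.mono_rel {E : Type*} {R R' : E → E → Prop} {F : Set E} (h : ∀ a b, R a b → R' a b)
    (hF : KConn R F) : KConn R' F := fun e he f hf =>
  rtg_mono (fun a b hab => ⟨hab.1, hab.2.1, h _ _ hab.2.2⟩) (hF e he f hf)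

theorem KConn.singleton {E : Type*} (R : E → E → Prop) (a : E) : KConn R {a} := by
  rintro e rfl f rfl
  exact ReflTransGen.refl

/-- union of two connected sets joined by `x`, `y` with `x = y` or `R x y`. -/
theorem KConn.union {E : Type*} {R : E → E → Prop} (hs : ∀ a b, R a b → R b a) {F F' : Set E}
    (hF : KConn R F) (hF' : KConn R F') {x y : E} (hx : x ∈ F) (hy : y ∈ F')
    (hxy : x = y ∨ R x y) : KConn R (F ∪ F') := by
  have h1 : ∀ e ∈ F, ∀ f ∈ F, ReflTransGen (fun a b => a ∈ F ∪ F' ∧ b ∈ F ∪ F' ∧ R a b) e f :=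
    fun e he f hf => rtg_mono (fun a b hab => ⟨Or.inl hab.1, Or.inl hab.2.1, hab.2.2⟩)
      (hF e he f hf)
  have h2 : ∀ e ∈ F', ∀ f ∈ F', ReflTransGen (fun a b => a ∈ F ∪ F' ∧ b ∈ F ∪ F' ∧ R a b) e f :=
    fun e he f hf => rtg_mono (fun a b hab => ⟨Or.inr hab.1, Or.inr hab.2.1, hab.2.2⟩)
      (hF' e he f hf)
  have h3 : ReflTransGen (fun a b => a ∈ F ∪ F' ∧ b ∈ F ∪ F' ∧ R a b) x y := by
    rcases hxy with rfl | h
    · exact ReflTransGen.refl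
    · exact ReflTransGen.single ⟨Or.inl hx, Or.inr hy, h⟩
  have h4 : ReflTransGen (fun a b => a ∈ F ∪ F' ∧ b ∈ F ∪ F' ∧ R a b) y x := by
    rcases hxy with rfl | h
    · exact ReflTransGen.refl
    · exact ReflTransGen.single ⟨Or.inr hy, Or.inl hx, hs _ _ h⟩
  rintro e (he | he) f (hf | hf)
  · exact h1 e he f hf
  · exact ((h1 e he x hx).trans h3).trans (h2 y hy f hf)
  · exact ((h2 e he y hy).trans h4).trans (h1 x hx f hf)
  · exact h2 e he f hf

def PRel {E : Type*} (D : Finset (E × E)) (a b : E) : Prop := (a, b) ∈ D ∨ (b, a) ∈ D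

def KSep {E : Type*} (D : Finset (E × E)) (P Q : Finset E) : Prop :=
  (∀ a, a ∈ P ∨ a ∈ Q) ∧ ∀ p ∈ D, (p.1 ∈ P ∧ p.2 ∈ P) ∨ (p.1 ∈ Q ∧ p.2 ∈ Q)

def Linked {E : Type*} (D : Finset (E × E)) (A B : Finset E) (k : ℕ) : Prop :=
  ∃ F : Fin k → Set E, (∀ i, KConn (PRel D) (F i)) ∧ (∀ i, ∃ a ∈ A, a ∈ F i) ∧
    (∀ i, ∃ b ∈ B, b ∈ F i) ∧ ∀ i j, i ≠ j → Disjoint (F i) (F j)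

theorem Linked.symm {E : Type*} {D : Finset (E × E)} {A B : Finset E} {k : ℕ}
    (h : Linked D A B k) : Linked D B A k := by
  obtain ⟨F, h1, h2, h3, h4⟩ := h
  exact ⟨F, h1, h3, h2, h4⟩

/-- reindexing by a set of the right size. -/
theorem Linked.index {E : Type*} {D : Finset (E × E)} {A B : Finset E} {k : ℕ}
    (h : Linked D A B k) (hA : A.card = k) :
    ∃ F : E → Set E, (∀ a ∈ A, KConn (PRel D) (F a)) ∧ (∀ a ∈ A, a ∈ F a) ∧
    (∀ a ∈ A, ∃ b ∈ B, b ∈ F a) ∧ ∀ a ∈ A, ∀ a' ∈ A, a ≠ a' → Disjoint (F a) (F a') := by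
  classical
  obtain ⟨F, h1, h2, h3, h4⟩ := h
  choose f hfA hfF using h2
  have hinj : Function.Injective f := by
    intro i j hij
    by_contra hne
    exact Set.disjoint_left.mp (h4 i j hne) (hfF i) (hij ▸ hfF j)
  have himg : Finset.univ.image f = A := by
    apply Finset.eq_of_subset_of_card_le
    · intro a ha
      obtain ⟨i, -, rfl⟩ := Finset.mem_image.mp ha
      exact hfA i
    · rw [Finset.card_image_of_injective _ hinj, hA]; simp
  have hF : ∀ i, {e | ∃ j, f j = f i ∧ e ∈ F j} = F i := by
    intro i
    ext e
    constructor
    · rintro ⟨j, hj, he⟩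
      exact hinj hj ▸ he
    · intro he
      exact ⟨i, rfl, he⟩
  have hsurj : ∀ a ∈ A, ∃ i, f i = a := by
    intro a ha
    rw [← himg] at ha
    simpa using ha
  refine ⟨fun a => {e | ∃ j, f j = a ∧ e ∈ F j}, ?_, ?_, ?_, ?_⟩
  · intro a ha
    obtain ⟨i, rfl⟩ := hsurj a ha
    simp only [hF]; exact h1 i
  · intro a ha
    obtain ⟨i, rfl⟩ := hsurj a ha
    simp only [hF]; exact hfF i
  · intro a ha
    obtain ⟨i, rfl⟩ := hsurj a ha
    simp only [hF]; exact h3 i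
  · intro a ha b hb hab
    obtain ⟨i, rfl⟩ := hsurj a ha
    obtain ⟨j, rfl⟩ := hsurj b hb
    simp only [hF]; exact h4 i j (fun h => hab (h ▸ rfl))

theorem KConn.subset_of {E : Type*} {D : Finset (E × E)} {P : Finset E}
    (hD : ∀ p ∈ D, p.1 ∈ P ∧ p.2 ∈ P) {F : Set E} (hF : KConn (PRel D) F) {a : E} (ha : a ∈ F)
    (haP : a ∈ P) : ∀ e ∈ F, e ∈ P := by
  intro e he
  have := hF a ha e he
  induction this with
  | refl => exact haP
  | tail _ h ih =>
    rcases h.2.2 with h | h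
    · exact (hD _ h).2
    · exact (hD _ h).1

theorem PRel.symm {E : Type*} {D : Finset (E × E)} (a b : E) (h : PRel D a b) : PRel D b a :=
  Or.symm h

/-- Separations of the graph restricted to one side extend. -/
theorem extend_sep {E : Type*} [DecidableEq E] {D : Finset (E × E)} {P Q : Finset E} {x y : E}
    (hcov : ∀ a, a ∈ P ∨ a ∈ Q)
    (hsep : ∀ p ∈ D, (p.1 ∈ P ∧ p.2 ∈ P) ∨ (p.1 ∈ Q ∧ p.2 ∈ Q) ∨ p = (x, y) ∨ p = (y, x))
    (hyQ : y ∈ Q) {A B : Finset E} (hA : A ⊆ P) (hB : B ⊆ Q) {k : ℕ}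
    (hk : ∀ P Q, KSep D P Q → A ⊆ P → B ⊆ Q → k ≤ (P ∩ Q).card)
    (P1 Q1 : Finset E) (h1 : KSep (D.filter (fun p => p.1 ∈ P ∧ p.2 ∈ P)) P1 Q1)
    (hA1 : A ⊆ P1) (hX : insert x (P ∩ Q) ⊆ Q1) : k ≤ (P1 ∩ Q1).card := by
  have hsub : (P1 ∩ P) ∩ (Q1 ∪ Q) ⊆ P1 ∩ Q1 := by
    intro e he
    simp only [Finset.mem_inter, Finset.mem_union] at he ⊢
    refine ⟨he.1.1, ?_⟩
    rcases he.2 with h | h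
    · exact h
    · exact hX (by simp [he.1.2, h])
  refine (hk (P1 ∩ P) (Q1 ∪ Q) ⟨?_, ?_⟩ ?_ ?_).trans (Finset.card_le_card hsub)
  · intro a
    have := hcov a
    have := h1.1 a
    simp only [Finset.mem_inter, Finset.mem_union]
    tauto
  · have hxQ : x ∈ Q1 := hX (by simp)
    have hS : ∀ e, e ∈ P → e ∈ Q → e ∈ Q1 := fun e h h' => hX (by simp [h, h'])
    intro p hp
    simp only [Finset.mem_inter, Finset.mem_union]
    rcases hsep p hp with h | h | rfl | rfl
    · have := h1.2 p (by simp [hp, h])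
      tauto
    · tauto
    · simp [hxQ, hyQ]
    · simp [hxQ, hyQ]
  · exact Finset.subset_inter hA1 hA
  · exact hB.trans Finset.subset_union_right

theorem menger_aux {E : Type*} [Fintype E] [DecidableEq E] (n : ℕ) :
    ∀ D : Finset (E × E), D.card = n → ∀ (A B : Finset E) (k : ℕ),
    (∀ P Q, KSep D P Q → A ⊆ P → B ⊆ Q → k ≤ (P ∩ Q).card) → Linked D A B k := by
  induction n using Nat.strong_induction_on with
  | _ n ih =>
  intro D hD A B k hk
  rcases D.eq_empty_or_nonempty with rfl | ⟨p0, hp0⟩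
  · have h := hk A (B ∪ Aᶜ) ⟨fun a => by simp; tauto, by simp⟩ le_rfl Finset.subset_union_left
    obtain ⟨I, hI, hIc⟩ := Finset.exists_subset_card_eq h
    have e := (Finset.equivFinOfCardEq hIc).symm
    have hmem : ∀ i, ((e i : I) : E) ∈ A ∧ ((e i : I) : E) ∈ B := by
      intro i
      have := hI (e i).2
      simp at this
      tauto
    refine ⟨fun i => {((e i : I) : E)}, fun i => KConn.singleton _ _,
      fun i => ⟨_, (hmem i).1, rfl⟩, fun i => ⟨_, (hmem i).2, rfl⟩, ?_⟩
    intro i j hij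
    rw [Set.disjoint_singleton]
    intro h
    exact hij (e.injective (Subtype.ext h))
  · by_cases hdel : ∀ P Q, KSep (D.erase p0) P Q → A ⊆ P → B ⊆ Q → k ≤ (P ∩ Q).card
    · obtain ⟨F, h1, h2, h3, h4⟩ := ih (D.erase p0).card
        (hD ▸ Finset.card_erase_lt_of_mem hp0) _ rfl A B k hdel
      refine ⟨F, fun i => (h1 i).mono_rel ?_, h2, h3, h4⟩
      intro a b hab
      exact hab.imp Finset.mem_of_mem_erase Finset.mem_of_mem_erase
    · push Not at hdel
      obtain ⟨P, Q, hs, hA, hB, hlt⟩ := hdel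
      have hxy : ∃ x y, (p0 = (x, y) ∨ p0 = (y, x)) ∧ x ∈ P ∧ x ∉ Q ∧ y ∈ Q ∧ y ∉ P := by
        by_contra hno
        have : KSep D P Q := by
          refine ⟨hs.1, fun p hp => ?_⟩
          by_cases hpp : p = p0
          · subst hpp
            by_contra hbad
            apply hno
            have c1 := hs.1 p.1
            have c2 := hs.1 p.2
            by_cases h1 : p.1 ∈ Q
            · exact ⟨p.2, p.1, Or.inr rfl, by tauto, by tauto, by tauto, by tauto⟩
            · exact ⟨p.1, p.2, Or.inl rfl, by tauto, by tauto, by tauto, by tauto⟩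
          · exact hs.2 p (Finset.mem_erase.mpr ⟨hpp, hp⟩)
        exact absurd (hk P Q this hA hB) (not_le.mpr hlt)
      obtain ⟨x, y, hp, hxP, hxQ, hyQ, hyP⟩ := hxy
      have hsep : ∀ p ∈ D, (p.1 ∈ P ∧ p.2 ∈ P) ∨ (p.1 ∈ Q ∧ p.2 ∈ Q) ∨ p = (x, y) ∨ p = (y, x) := by
        intro p hpD
        by_cases hpp : p = p0
        · subst hpp; tauto
        · have := hs.2 p (Finset.mem_erase.mpr ⟨hpp, hpD⟩)
          tauto
      set DP := D.filter (fun p => p.1 ∈ P ∧ p.2 ∈ P) with hDP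
      set DQ := D.filter (fun p => p.1 ∈ Q ∧ p.2 ∈ Q) with hDQ
      have hcP : DP.card < n := by
        rw [← hD]
        apply Finset.card_lt_card
        refine (Finset.filter_ssubset).mpr ⟨p0, hp0, ?_⟩
        rcases hp with rfl | rfl <;> simp [hyP]
      have hcQ : DQ.card < n := by
        rw [← hD]
        apply Finset.card_lt_card
        refine (Finset.filter_ssubset).mpr ⟨p0, hp0, ?_⟩
        rcases hp with rfl | rfl <;> simp [hxQ]
      have hRxy : PRel D x y := by
        rcases hp with rfl | rfl
        · exact Or.inl hp0
        · exact Or.inr hp0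
      have hkP := extend_sep hs.1 hsep hyQ hA hB hk
      have hsep' : ∀ p ∈ D, (p.1 ∈ Q ∧ p.2 ∈ Q) ∨ (p.1 ∈ P ∧ p.2 ∈ P) ∨ p = (y, x) ∨ p = (x, y) := by
        intro p hpD
        have := hsep p hpD
        tauto
      have hk' : ∀ P Q, KSep D P Q → B ⊆ P → A ⊆ Q → k ≤ (P ∩ Q).card := by
        intro P Q h hB hA
        rw [Finset.inter_comm]
        exact hk Q P ⟨fun a => (h.1 a).symm, fun p hp => (h.2 p hp).symm⟩ hA hB
      have hkQ := extend_sep (fun a => (hs.1 a).symm) hsep' hxP hB hA hk'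
      have LP := (ih _ hcP DP rfl A (insert x (P ∩ Q)) k
        (fun P1 Q1 h h1 h2 => hkP P1 Q1 h h1 h2)).symm
      have LQ := (ih _ hcQ DQ rfl B (insert y (Q ∩ P)) k
        (fun P1 Q1 h h1 h2 => hkQ P1 Q1 h h1 h2)).symm
      -- the order is exactly k - 1
      have hcard1 : (insert x (P ∩ Q)).card = k := by
        have h1 : (insert x (P ∩ Q)).card = (P ∩ Q).card + 1 :=
          Finset.card_insert_of_notMem (by simp [hxQ])
        have h2 := hkP Finset.univ (insert x (P ∩ Q)) ⟨by simp, by simp⟩ (by simp) le_rfl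
        rw [Finset.univ_inter] at h2
        omega
      have hcard2 : (insert y (Q ∩ P)).card = k := by
        rw [Finset.card_insert_of_notMem (by simp [hyP]), Finset.inter_comm]
        rwa [Finset.card_insert_of_notMem (by simp [hxQ])] at hcard1
      obtain ⟨C, c1, c2, c3, c4⟩ := LP.index hcard1
      obtain ⟨C', d1, d2, d3, d4⟩ := LQ.index hcard2
      have cP : ∀ z ∈ insert x (P ∩ Q), ∀ e ∈ C z, e ∈ P := by
        intro z hz
        refine KConn.subset_of (D := DP) (fun p hp => ?_) (c1 z hz) (c2 z hz) ?_
        · exact (Finset.mem_filter.mp hp).2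
        · simp at hz; rcases hz with rfl | hz
          · exact hxP
          · exact hz.1
      have dQ : ∀ z ∈ insert y (Q ∩ P), ∀ e ∈ C' z, e ∈ Q := by
        intro z hz
        refine KConn.subset_of (D := DQ) (fun p hp => ?_) (d1 z hz) (d2 z hz) ?_
        · exact (Finset.mem_filter.mp hp).2
        · simp at hz; rcases hz with rfl | hz
          · exact hyQ
          · exact hz.1
      let σ : E → E := fun z => if z = x then y else z
      have hσ : ∀ z ∈ insert x (P ∩ Q), σ z ∈ insert y (Q ∩ P) := by
        intro z hz
        by_cases h : z = x
        · simp [σ, h]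
        · simp [h] at hz
          simp [σ, h, hz]
      have hσinj : ∀ z ∈ insert x (P ∩ Q), ∀ w ∈ insert x (P ∩ Q), σ z = σ w → z = w := by
        intro z hz w hw
        simp only [σ, Finset.mem_insert, Finset.mem_inter] at hz hw ⊢
        split_ifs with h1 h2 h2
        · intro _; rw [h1, h2]
        · rintro rfl; tauto
        · rintro rfl; tauto
        · exact id
      have hcross : ∀ z ∈ insert x (P ∩ Q), ∀ w ∈ insert x (P ∩ Q), z ≠ w →
          Disjoint (C z) (C' (σ w)) := by
        intro z hz w hw hzw
        rw [Set.disjoint_left]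
        intro e he he'
        have heP := cP z hz e he
        have heQ := dQ _ (hσ w hw) e he'
        have e1 : e ∈ insert x (P ∩ Q) := by simp [heP, heQ]
        have e2 : e ∈ insert y (Q ∩ P) := by simp [heP, heQ]
        have ez : z = e := by
          by_contra hne
          exact Set.disjoint_left.mp (c4 z hz e e1 hne) he (c2 e e1)
        have ew : σ w = e := by
          by_contra hne
          exact Set.disjoint_left.mp (d4 _ (hσ w hw) e e2 hne) he' (d2 e e2)
        have : σ e = e := by
          simp only [σ]
          rw [if_neg]
          rintro rfl
          exact hxQ heQ
        exact hzw (ez.trans (hσinj w hw e e1 (ew.trans this.symm)).symm)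
      have e := (Finset.equivFinOfCardEq hcard1).symm
      have hmonoP : ∀ a b, PRel DP a b → PRel D a b := fun a b h =>
        h.imp (fun h => (Finset.mem_filter.mp h).1) (fun h => (Finset.mem_filter.mp h).1)
      have hmonoQ : ∀ a b, PRel DQ a b → PRel D a b := fun a b h =>
        h.imp (fun h => (Finset.mem_filter.mp h).1) (fun h => (Finset.mem_filter.mp h).1)
      refine ⟨fun i => C (e i) ∪ C' (σ (e i)), ?_, ?_, ?_, ?_⟩
      · intro i
        refine KConn.union PRel.symm ((c1 _ (e i).2).mono_rel hmonoP)
          ((d1 _ (hσ _ (e i).2)).mono_rel hmonoQ) (c2 _ (e i).2) (d2 _ (hσ _ (e i).2)) ?_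
        by_cases h : ((e i : _) : E) = x
        · right; simpa [σ, h] using hRxy
        · left; simp [σ, h]
      · intro i
        obtain ⟨a, ha, ha'⟩ := c3 _ (e i).2
        exact ⟨a, ha, Or.inl ha'⟩
      · intro i
        obtain ⟨a, ha, ha'⟩ := d3 _ (hσ _ (e i).2)
        exact ⟨a, ha, Or.inr ha'⟩
      · intro i j hij
        have hne : ((e i : _) : E) ≠ e j := fun h => hij (e.injective (Subtype.ext h))
        rw [Set.disjoint_union_left, Set.disjoint_union_right, Set.disjoint_union_right]
        refine ⟨⟨c4 _ (e i).2 _ (e j).2 hne, hcross _ (e i).2 _ (e j).2 hne⟩,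
          (hcross _ (e j).2 _ (e i).2 hne.symm).symm, d4 _ (hσ _ (e i).2) _ (hσ _ (e j).2) ?_⟩
        exact fun h => hne (hσinj _ (e i).2 _ (e j).2 h)

namespace Multigraph

def Inc {V E : Type*} (G : Multigraph V E) (e f : E) : Prop :=
  ∃ v : V, v ∈ G.ends e ∧ v ∈ G.ends f

theorem Inc.symm {V E : Type*} {G : Multigraph V E} {e f : E} (h : G.Inc e f) : G.Inc f e := by
  obtain ⟨v, h1, h2⟩ := h
  exact ⟨v, h2, h1⟩

theorem exists_end {V E : Type*} (G : Multigraph V E) (e : E) : ∃ v, v ∈ G.ends e := by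
  induction h : G.ends e with
  | _ a b => exact ⟨a, by simp⟩

theorem Inc.refl {V E : Type*} (G : Multigraph V E) (e : E) : G.Inc e e := by
  obtain ⟨v, h⟩ := G.exists_end e
  exact ⟨v, h, h⟩

/-- the data: a colouring `c` of the edges by matchings with connected unions, and a transversal. -/
structure Kempe {V E K : Type*} (G : Multigraph V E) (c : E → K) (t : K → E) : Prop where
  hm : ∀ e f, c e = c f → G.Inc e f → e = f
  hc : ∀ i j, i ≠ j → ∀ e f, (c e = i ∨ c e = j) → (c f = i ∨ c f = j) →
    ReflTransGen (fun a b => (c a = i ∨ c a = j) ∧ (c b = i ∨ c b = j) ∧ G.Inc a b) e f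
  ht : ∀ i, c (t i) = i

def Good {V E K : Type*} (G : Multigraph V E) (t : K → E) : Prop :=
  ∃ F : K → Set E, (∀ i, t i ∈ F i) ∧ (∀ i, KConn G.Inc (F i)) ∧
    (∀ i j, i ≠ j → Disjoint (F i) (F j)) ∧
    (∀ i j, i ≠ j → ∃ e ∈ F i, ∃ f ∈ F j, G.Inc e f)

def Full {V E K : Type*} (G : Multigraph V E) (c : E → K) (v : V) : Prop :=
  ∀ i, ∃ e, c e = i ∧ v ∈ G.ends e

open Classical in
noncomputable def incPairs {V E : Type*} [Fintype E] (G : Multigraph V E) : Finset (E × E) :=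
  Finset.univ.filter (fun p => G.Inc p.1 p.2)

theorem prel_incPairs {V E : Type*} [Fintype E] (G : Multigraph V E) (a b : E)
    (h : PRel G.incPairs a b) : G.Inc a b := by
  rcases h with h | h
  · simpa [incPairs] using h
  · have : G.Inc b a := by simpa [incPairs] using h
    exact this.symm

/-- Facts about a small separation of the line graph. -/
theorem small_sep {V E K : Type*} [Fintype K] [DecidableEq E]
    {G : Multigraph V E} {c : E → K} {t : K → E}
    (hK : G.Kempe c t) {v : V} (hv : G.Full c v) {P Q : Finset E}
    (hcov : ∀ a, a ∈ P ∨ a ∈ Q)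
    (hsep : ∀ a b, G.Inc a b → (a ∈ P ∧ b ∈ P) ∨ (a ∈ Q ∧ b ∈ Q))
    (hT : ∀ i, t i ∈ P) (hQ : ∀ e, v ∈ G.ends e → e ∈ Q)
    (hlt : (P ∩ Q).card < Fintype.card K) :
    (P ∩ Q).card + 1 = Fintype.card K ∧ (∀ e ∈ P ∩ Q, ∀ f ∈ P ∩ Q, c e = c f → e = f) ∧
    ∃ j, (∀ e ∈ P ∩ Q, c e ≠ j) ∧ ∀ i, i ≠ j → ∃ e ∈ P ∩ Q, c e = i := by
  classical
  have hkey : ∀ i j, i ≠ j → (∀ e ∈ P ∩ Q, c e ≠ i) → (∀ e ∈ P ∩ Q, c e ≠ j) → False := by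
    intro i j hij hi hj
    obtain ⟨f, hf, hvf⟩ := hv j
    have hfQ := hQ f hvf
    have hw := hK.hc i j hij (t i) f (Or.inl (hK.ht i)) (Or.inr hf)
    have hns : ∀ e, (c e = i ∨ c e = j) → e ∈ P → e ∉ Q := by
      intro e he hP hQ
      have hS : e ∈ P ∩ Q := Finset.mem_inter.mpr ⟨hP, hQ⟩
      rcases he with he | he
      · exact hi e hS he
      · exact hj e hS he
    have hall : ∀ g, ReflTransGen (fun a b => (c a = i ∨ c a = j) ∧ (c b = i ∨ c b = j) ∧
        G.Inc a b) (t i) g → g ∉ Q := by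
      intro g hg
      induction hg with
      | refl => exact hns _ (Or.inl (hK.ht i)) (hT i)
      | tail _ h ih =>
        rcases hsep _ _ h.2.2 with h' | h'
        · exact hns _ h.2.1 h'.2
        · exact absurd h'.1 ih
    exact hall f hw hfQ
  have himg : (Finset.univ \ (P ∩ Q).image c).card ≤ 1 := by
    rw [Finset.card_le_one]
    intro i hi j hj
    by_contra hij
    simp only [Finset.mem_sdiff, Finset.mem_univ, true_and, Finset.mem_image, not_exists,
      not_and] at hi hj
    exact hkey i j hij hi hj
  have h1 : ((P ∩ Q).image c).card ≤ (P ∩ Q).card := Finset.card_image_le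
  have h2 := Finset.card_sdiff_add_card_eq_card (Finset.subset_univ ((P ∩ Q).image c))
  rw [Finset.card_univ] at h2
  have h3 : ((P ∩ Q).image c).card = (P ∩ Q).card := by omega
  refine ⟨by omega, ?_, ?_⟩
  · intro e he f hf hef
    exact Finset.card_image_iff.mp h3 he hf hef
  · have h4 : (Finset.univ \ (P ∩ Q).image c).card = 1 := by omega
    obtain ⟨j, hj⟩ := Finset.card_eq_one.mp h4
    refine ⟨j, ?_, ?_⟩
    · intro e he hej
      have : j ∈ Finset.univ \ (P ∩ Q).image c := by rw [hj]; simp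
      simp only [Finset.mem_sdiff, Finset.mem_univ, true_and, Finset.mem_image, not_exists,
        not_and] at this
      exact this e he hej
    · intro i hij
      by_contra hno
      have : i ∈ Finset.univ \ (P ∩ Q).image c := by
        simp only [Finset.mem_sdiff, Finset.mem_univ, true_and, Finset.mem_image]
        rintro ⟨e, he, h⟩
        exact hno ⟨e, he, h⟩
      rw [hj] at this
      exact hij (by simpa using this)


universe u


/-- the projection contracting the vertex set `N` to `v`. -/
noncomputable def proj {V : Type*} (N : Set V) (v : V) (w : V) : V :=
  open Classical in if w ∈ N then v else w

theorem proj_eq {V : Type*} {N : Set V} {v : V} (hv : v ∈ N) {w w' : V}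
    (h : proj N v w = proj N v w') : w = w' ∨ (w ∈ N ∧ w' ∈ N) := by
  unfold proj at h
  split_ifs at h with h1 h2 h2
  · exact Or.inr ⟨h1, h2⟩
  · exact absurd (h ▸ hv) h2
  · exact absurd (h ▸ hv) h1
  · exact Or.inl h

/-- contraction -/
noncomputable def contract {V E : Type*} (G : Multigraph V E) (N : Set V) (v : V) (hv : v ∈ N)
    (P : Finset E) (hP : ∀ e ∈ P, ∃ w ∈ G.ends e, w ∉ N) : Multigraph V {e // e ∈ P} where
  ends e := (G.ends e.1).map (proj N v)
  not_isDiag e := by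
    have hd := G.not_isDiag e.1
    obtain ⟨w, hw, hwN⟩ := hP e.1 e.2
    induction h : G.ends e.1 with
    | _ a b =>
      rw [h] at hd hw
      rw [Sym2.map_mk, Sym2.mk_isDiag_iff]
      rw [Sym2.mk_isDiag_iff] at hd
      intro hab
      rcases proj_eq hv hab with h | h
      · exact hd h
      · rcases Sym2.mem_iff.mp hw with rfl | rfl
        · exact hwN h.1
        · exact hwN h.2

theorem full_step {V K : Type*} {E : Type u} [Fintype K] [Fintype E]
    {G : Multigraph V E} {c : E → K} {t : K → E}
    (hK : G.Kempe c t) {v : V} (hv : G.Full c v) (hnt : Nontrivial K)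
    (IH : ∀ (E' : Type u) [Fintype E'], Fintype.card E' < Fintype.card E →
      ∀ (G' : Multigraph V E') (c' : E' → K) (t' : K → E'), G'.Kempe c' t' → G'.Good t') :
    G.Good t := by
  classical
  have htinj : Function.Injective t := fun i j hij => by
    rw [← hK.ht i, ← hK.ht j, hij]
  set T := Finset.univ.image t with hTdef
  have hTcard : T.card = Fintype.card K := by
    rw [hTdef, Finset.card_image_of_injective _ htinj, Finset.card_univ]
  set B := Finset.univ.filter (fun e => v ∈ G.ends e) with hBdef
  by_cases hlink : ∀ P Q, KSep G.incPairs P Q → T ⊆ P → B ⊆ Q → Fintype.card K ≤ (P ∩ Q).card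
  · obtain ⟨F, h1, h2, h3, h4⟩ := (menger_aux _ _ rfl T B _ hlink).index hTcard
    have hmem : ∀ i, t i ∈ T := fun i => by simp [hTdef]
    refine ⟨fun i => F (t i), fun i => h2 _ (hmem i), fun i => (h1 _ (hmem i)).mono_rel
      (prel_incPairs G), fun i j hij => h4 _ (hmem i) _ (hmem j) (fun h => hij (htinj h)), ?_⟩
    intro i j _
    obtain ⟨e, he, he'⟩ := h3 _ (hmem i)
    obtain ⟨f, hf, hf'⟩ := h3 _ (hmem j)
    exact ⟨e, he', f, hf', v, by simpa [hBdef] using he, by simpa [hBdef] using hf⟩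
  push Not at hlink
  obtain ⟨P, Q, hs, hTP, hBQ, hlt⟩ := hlink
  have hsep : ∀ a b, G.Inc a b → (a ∈ P ∧ b ∈ P) ∨ (a ∈ Q ∧ b ∈ Q) := by
    intro a b hab
    exact hs.2 (a, b) (by simpa [incPairs] using hab)
  have hT : ∀ i, t i ∈ P := fun i => hTP (by simp [hTdef])
  have hQ : ∀ e, v ∈ G.ends e → e ∈ Q := fun e he => hBQ (by simpa [hBdef] using he)
  obtain ⟨hcard, hrain, j, hj, hnj⟩ := small_sep hK hv hs.1 hsep hT hQ hlt
  obtain ⟨ej, hej, hvej⟩ := hv j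
  have hejQ := hQ ej hvej
  have hejP : ej ∉ P := fun h => hj ej (Finset.mem_inter.mpr ⟨h, hejQ⟩) hej
  have htjQ : t j ∉ Q := fun h => hj (t j) (Finset.mem_inter.mpr ⟨hT j, h⟩) (hK.ht j)
  -- each separator edge is incident with an edge of P \ Q
  have hsP : ∀ s ∈ P ∩ Q, ∃ a, a ∉ Q ∧ G.Inc a s := by
    intro s hs'
    by_contra hno
    push Not at hno
    have hall : ∀ g, ReflTransGen (fun a b => (c a = c s ∨ c a = j) ∧ (c b = c s ∨ c b = j) ∧
        G.Inc a b) (t j) g → g ∉ Q := by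
      intro g hg
      induction hg with
      | refl => exact htjQ
      | @tail x y _ h ih =>
        intro hyQ
        have hyP : y ∈ P := by
          rcases hsep _ _ h.2.2 with h' | h'
          · exact h'.2
          · exact absurd h'.1 ih
        have hyS : y ∈ P ∩ Q := Finset.mem_inter.mpr ⟨hyP, hyQ⟩
        have hcy : c y = c s := by
          rcases h.2.1 with h' | h'
          · exact h'
          · exact absurd h' (hj y hyS)
        have := hrain y hyS s hs' hcy
        subst this
        exact hno x ih h.2.2
    exact hall ej (hK.hc (c s) j (hj s hs') _ _ (Or.inr (hK.ht j)) (Or.inr hej)) hejQ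
  set N : Set V := {w | ∃ b, b ∉ P ∧ w ∈ G.ends b} with hN
  have hvN : v ∈ N := ⟨ej, hejP, hvej⟩
  have hF1 : ∀ e w, w ∈ G.ends e → w ∈ N → e ∈ Q := by
    rintro e w hw ⟨b, hb, hwb⟩
    rcases hsep e b ⟨w, hw, hwb⟩ with h | h
    · exact absurd h.2 hb
    · exact h.1
  have hF2 : ∀ e ∈ P, ∃ w ∈ G.ends e, w ∉ N := by
    intro e he
    by_contra hno
    push Not at hno
    have heQ : e ∈ Q := by
      obtain ⟨w, hw⟩ := G.exists_end e
      exact hF1 e w hw (hno w hw)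
    obtain ⟨a, haQ, w, hwa, hwe⟩ := hsP e (Finset.mem_inter.mpr ⟨he, heQ⟩)
    exact haQ (hF1 a w hwa (hno w hwe))
  -- the contracted graph
  set G' := G.contract N v hvN P hF2 with hG'
  have hinc' : ∀ (e f : {e // e ∈ P}), G'.Inc e f →
      G.Inc e.1 f.1 ∨ (e.1 ∈ P ∩ Q ∧ f.1 ∈ P ∩ Q) := by
    rintro e f ⟨w, hwe, hwf⟩
    obtain ⟨x, hx, rfl⟩ := Sym2.mem_map.mp hwe
    obtain ⟨y, hy, hxy⟩ := Sym2.mem_map.mp hwf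
    rcases proj_eq hvN hxy with h | h
    · subst h
      exact Or.inl ⟨y, hx, hy⟩
    · exact Or.inr ⟨Finset.mem_inter.mpr ⟨e.2, hF1 _ _ hx h.2⟩,
        Finset.mem_inter.mpr ⟨f.2, hF1 _ _ hy h.1⟩⟩
  have hincup : ∀ (e f : {e // e ∈ P}), G.Inc e.1 f.1 → G'.Inc e f := by
    rintro e f ⟨w, hwe, hwf⟩
    exact ⟨proj N v w, Sym2.mem_map.mpr ⟨w, hwe, rfl⟩, Sym2.mem_map.mpr ⟨w, hwf, rfl⟩⟩
  have hincN : ∀ (e f : {e // e ∈ P}) (x y : V), x ∈ N → y ∈ N → x ∈ G.ends e.1 →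
      y ∈ G.ends f.1 → G'.Inc e f := by
    intro e f x y hx hy hxe hyf
    exact ⟨v, Sym2.mem_map.mpr ⟨x, hxe, by simp [proj, hx]⟩,
      Sym2.mem_map.mpr ⟨y, hyf, by simp [proj, hy]⟩⟩
  have hK' : G'.Kempe (fun e => c e.1) (fun i => ⟨t i, hT i⟩) := by
    refine ⟨?_, ?_, fun i => hK.ht i⟩
    · intro e f hef hi
      apply Subtype.ext
      rcases hinc' e f hi with h | h
      · exact hK.hm _ _ hef h
      · exact hrain _ h.1 _ h.2 hef
    · intro i i' hii e f he hf
      have hall : ∀ g, ReflTransGen (fun a b => (c a = i ∨ c a = i') ∧ (c b = i ∨ c b = i') ∧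
          G.Inc a b) e.1 g →
          (∀ hg : g ∈ P, ReflTransGen (fun a b : {e // e ∈ P} => (c a.1 = i ∨ c a.1 = i') ∧
            (c b.1 = i ∨ c b.1 = i') ∧ G'.Inc a b) e ⟨g, hg⟩) ∧
          (g ∉ P → ∃ p : {e // e ∈ P}, (c p.1 = i ∨ c p.1 = i') ∧ (∃ x ∈ N, x ∈ G.ends p.1) ∧
            ReflTransGen (fun a b : {e // e ∈ P} => (c a.1 = i ∨ c a.1 = i') ∧
            (c b.1 = i ∨ c b.1 = i') ∧ G'.Inc a b) e p) := by
        intro g hg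
        induction hg with
        | refl => exact ⟨fun _ => ReflTransGen.refl, fun h => absurd e.2 h⟩
        | @tail x y _ h ih =>
          obtain ⟨hcx, hcy, w, hwx, hwy⟩ := h
          by_cases hx : x ∈ P
          · have ihx := ih.1 hx
            refine ⟨fun hy => ihx.tail ⟨hcx, hcy, hincup _ _ ⟨w, hwx, hwy⟩⟩, fun hy => ?_⟩
            exact ⟨⟨x, hx⟩, hcx, ⟨w, ⟨y, hy, hwy⟩, hwx⟩, ihx⟩
          · obtain ⟨p, hcp, ⟨u, huN, hup⟩, hp⟩ := ih.2 hx
            refine ⟨fun hy => hp.tail ⟨hcp, hcy, ?_⟩, fun hy => ⟨p, hcp, ⟨u, huN, hup⟩, hp⟩⟩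
            exact hincN p ⟨y, hy⟩ u w huN ⟨x, hx, hwx⟩ hup hwy
      exact (hall f.1 (hK.hc i i' hii e.1 f.1 he hf)).1 f.2
  obtain ⟨F', f1, f2, f3, f4⟩ := IH {e // e ∈ P} (by
    apply Fintype.card_subtype_lt (x := ej)
    exact hejP) G' _ _ hK'
  set DQ := G.incPairs.filter (fun p => p.1 ∈ Q ∧ p.2 ∈ Q) with hDQ
  have hlinkQ : ∀ P1 Q1, KSep DQ P1 Q1 → (P ∩ Q) ⊆ P1 → B ⊆ Q1 →
      (P ∩ Q).card ≤ (P1 ∩ Q1).card := by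
    intro P1 Q1 hs1 hSP hBQ1
    by_contra hlt1
    push Not at hlt1
    have hcol : 1 < (Finset.univ \ (P1 ∩ Q1).image c).card := by
      have h1 : ((P1 ∩ Q1).image c).card ≤ (P1 ∩ Q1).card := Finset.card_image_le
      have h2 := Finset.card_sdiff_add_card_eq_card (Finset.subset_univ ((P1 ∩ Q1).image c))
      rw [Finset.card_univ] at h2
      omega
    obtain ⟨i, hi, hij⟩ := Finset.exists_mem_ne hcol j
    obtain ⟨i', hi', hii'⟩ := Finset.exists_mem_ne hcol i
    simp only [Finset.mem_sdiff, Finset.mem_univ, true_and, Finset.mem_image, not_exists,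
        not_and] at hi hi'
    obtain ⟨s, hsS, hsc⟩ := hnj i hij
    obtain ⟨e', he', hve'⟩ := hv i'
    have hno : ∀ x, (c x = i ∨ c x = i') → x ∈ P1 → x ∉ Q1 := by
      intro x hx h1 h2
      rcases hx with hx | hx
      · exact hi x (Finset.mem_inter.mpr ⟨h1, h2⟩) hx
      · exact hi' x (Finset.mem_inter.mpr ⟨h1, h2⟩) hx
    have hall : ∀ g, ReflTransGen (fun a b => (c a = i ∨ c a = i') ∧ (c b = i ∨ c b = i') ∧
          G.Inc a b) s g → (g ∈ Q → g ∈ P1) := by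
      intro g hg
      induction hg with
      | refl => exact fun _ => hSP hsS
      | @tail x y _ h ih =>
        intro hyQ
        by_cases hxQ : x ∈ Q
        · have hxP1 := ih hxQ
          have hxQ1 := hno x h.1 hxP1
          rcases hs1.2 (x, y) (by simp [hDQ, incPairs, hxQ, hyQ, h.2.2]) with h' | h'
          · exact h'.2
          · exact absurd h'.1 hxQ1
        · rcases hsep _ _ h.2.2 with h' | h'
          · exact hSP (Finset.mem_inter.mpr ⟨h'.2, hyQ⟩)
          · exact absurd h'.1 hxQ
    have := hall e' (hK.hc i i' hii'.symm s e' (Or.inl hsc) (Or.inr he')) (hQ e' hve')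
    exact hno e' (Or.inr he') this (hBQ1 (by simpa [hBdef] using hve'))
  obtain ⟨C, d1, d2, d3, d4⟩ := (menger_aux _ _ rfl (P ∩ Q) B _ hlinkQ).index rfl
  have dQ : ∀ s ∈ P ∩ Q, ∀ e ∈ C s, e ∈ Q := by
    intro s hs'
    refine KConn.subset_of (D := DQ) (fun p hp => ?_) (d1 s hs') (d2 s hs')
      (Finset.mem_inter.mp hs').2
    exact (Finset.mem_filter.mp hp).2
  have dS : ∀ s ∈ P ∩ Q, ∀ e ∈ C s, e ∈ P → e = s := by
    intro s hs' e he heP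
    have heS : e ∈ P ∩ Q := Finset.mem_inter.mpr ⟨heP, dQ s hs' e he⟩
    by_contra hne
    exact Set.disjoint_left.mp (d4 s hs' e heS (Ne.symm hne)) he (d2 e heS)
  have d1' : ∀ s ∈ P ∩ Q, KConn G.Inc (C s) := fun s hs' => (d1 s hs').mono_rel (fun a b h =>
    prel_incPairs G a b (h.imp (fun h => (Finset.mem_filter.mp h).1)
      (fun h => (Finset.mem_filter.mp h).1)))
  have dv : ∀ s ∈ P ∩ Q, ∃ e ∈ C s, v ∈ G.ends e := by
    intro s hs'
    obtain ⟨b, hb, hb'⟩ := d3 s hs'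
    exact ⟨b, hb', by simpa [hBdef] using hb⟩
  let F : K → Set E := fun i => {e | (∃ h : e ∈ P, (⟨e, h⟩ : {e // e ∈ P}) ∈ F' i) ∨
    ∃ s, ∃ h : s ∈ P, s ∈ Q ∧ (⟨s, h⟩ : {e // e ∈ P}) ∈ F' i ∧ e ∈ C s}
  have hFC : ∀ i s (h : s ∈ P), s ∈ Q → (⟨s, h⟩ : {e // e ∈ P}) ∈ F' i → ∀ e ∈ C s, e ∈ F i :=
    fun i s h hQ' hF' e he => Or.inr ⟨s, h, hQ', hF', he⟩
  refine ⟨F, fun i => Or.inl ⟨hT i, f1 i⟩, ?_, ?_, ?_⟩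
  · intro i
    -- connections inside C s
    have hCc : ∀ s (h : s ∈ P), s ∈ Q → (⟨s, h⟩ : {e // e ∈ P}) ∈ F' i → ∀ e ∈ C s, ∀ f ∈ C s,
        ReflTransGen (fun a b => a ∈ F i ∧ b ∈ F i ∧ G.Inc a b) e f := by
      intro s h hsQ hF' e he f hf
      refine rtg_mono ?_ (d1' s (Finset.mem_inter.mpr ⟨h, hsQ⟩) e he f hf)
      intro a b hab
      exact ⟨hFC i s h hsQ hF' a hab.1, hFC i s h hsQ hF' b hab.2.1, hab.2.2⟩
    have hP' : ∀ e ∈ F' i, ∀ f ∈ F' i,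
        ReflTransGen (fun a b => a ∈ F i ∧ b ∈ F i ∧ G.Inc a b) e.1 f.1 := by
      intro e he f hf
      have := f2 i e he f hf
      induction this with
      | refl => exact ReflTransGen.refl
      | @tail x y _ h ih =>
        refine (ih h.1).trans ?_
        rcases hinc' x y h.2.2 with h' | h'
        · exact ReflTransGen.single ⟨Or.inl ⟨x.2, h.1⟩, Or.inl ⟨y.2, h.2.1⟩, h'⟩
        · obtain ⟨a, ha, hva⟩ := dv _ h'.1
          obtain ⟨b, hb, hvb⟩ := dv _ h'.2
          have hxQ := (Finset.mem_inter.mp h'.1).2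
          have hyQ := (Finset.mem_inter.mp h'.2).2
          refine ((hCc x.1 x.2 hxQ h.1 _ (d2 _ h'.1) a ha).tail ⟨hFC i _ x.2 hxQ h.1 a ha,
            hFC i _ y.2 hyQ h.2.1 b hb, v, hva, hvb⟩).trans ?_
          exact hCc y.1 y.2 hyQ h.2.1 b hb _ (d2 _ h'.2)
    have hrep : ∀ e ∈ F i, ∃ p ∈ F' i,
        ReflTransGen (fun a b => a ∈ F i ∧ b ∈ F i ∧ G.Inc a b) e p.1 ∧
        ReflTransGen (fun a b => a ∈ F i ∧ b ∈ F i ∧ G.Inc a b) p.1 e := by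
      rintro e (⟨h, he⟩ | ⟨s, h, hsQ, hs', he⟩)
      · exact ⟨⟨e, h⟩, he, ReflTransGen.refl, ReflTransGen.refl⟩
      · have hss := d2 s (Finset.mem_inter.mpr ⟨h, hsQ⟩)
        exact ⟨⟨s, h⟩, hs', hCc s h hsQ hs' e he s hss, hCc s h hsQ hs' s hss e he⟩
    intro e he f hf
    obtain ⟨p, hp, hp1, -⟩ := hrep e he
    obtain ⟨q, hq, -, hq2⟩ := hrep f hf
    exact (hp1.trans (hP' p hp q hq)).trans hq2
  · intro i i' hii
    have hd := f3 i i' hii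
    rw [Set.disjoint_left] at hd ⊢
    rintro e (⟨h, he⟩ | ⟨s, h, hsQ, hs', he⟩) (⟨h2, he2⟩ | ⟨s2, h2, hsQ2, hs2, he2⟩)
    · exact hd he he2
    · have := dS s2 (Finset.mem_inter.mpr ⟨h2, hsQ2⟩) e he2 h
      subst this
      exact hd he hs2
    · have := dS s (Finset.mem_inter.mpr ⟨h, hsQ⟩) e he h2
      subst this
      exact hd hs' he2
    · have : s = s2 := by
        by_contra hne
        exact Set.disjoint_left.mp (d4 s (Finset.mem_inter.mpr ⟨h, hsQ⟩) s2
          (Finset.mem_inter.mpr ⟨h2, hsQ2⟩) hne) he he2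
      subst this
      exact hd hs' hs2
  · intro i i' hii
    obtain ⟨e, he, f, hf, hef⟩ := f4 i i' hii
    rcases hinc' e f hef with h | h
    · exact ⟨e.1, Or.inl ⟨e.2, he⟩, f.1, Or.inl ⟨f.2, hf⟩, h⟩
    · obtain ⟨a, ha, hva⟩ := dv _ h.1
      obtain ⟨b, hb, hvb⟩ := dv _ h.2
      exact ⟨a, hFC i _ e.2 (Finset.mem_inter.mp h.1).2 he a ha, b,
        hFC i' _ f.2 (Finset.mem_inter.mp h.2).2 hf b hb, v, hva, hvb⟩


theorem Kempe.exists_inc {V E K : Type*} {G : Multigraph V E} {c : E → K} {t : K → E}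
    (hK : G.Kempe c t) (f : E) (i : K) (hi : c f ≠ i) : ∃ g, c g = i ∧ G.Inc f g := by
  by_contra hno
  push Not at hno
  have hall : ∀ g, ReflTransGen (fun a b => (c a = c f ∨ c a = i) ∧ (c b = c f ∨ c b = i) ∧
      G.Inc a b) f g → g = f := by
    intro g hg
    induction hg with
    | refl => rfl
    | @tail x y _ h ih =>
      subst ih
      rcases h.2.1 with h' | h'
      · exact hK.hm _ _ h' h.2.2.symm
      · exact absurd h.2.2 (hno y h')
  have := hall (t i) (hK.hc (c f) i hi f (t i) (Or.inl rfl) (Or.inr (hK.ht i)))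
  exact hi (by rw [← this, hK.ht])

theorem exists_ends {V E : Type*} (G : Multigraph V E) (e : E) :
    ∃ x y, x ≠ y ∧ G.ends e = s(x, y) := by
  have hd := G.not_isDiag e
  induction h : G.ends e with
  | _ a b =>
    rw [h] at hd
    exact ⟨a, b, by simpa using hd, rfl⟩

theorem ends_of_mem {V E : Type*} (G : Multigraph V E) {e : E} {x : V} (hx : x ∈ G.ends e) :
    ∃ y, x ≠ y ∧ G.ends e = s(x, y) := by
  obtain ⟨a, b, hab, h⟩ := G.exists_ends e
  rw [h] at hx
  rcases Sym2.mem_iff.mp hx with rfl | rfl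
  · exact ⟨b, hab, h⟩
  · exact ⟨a, hab.symm, by rw [h, Sym2.eq_swap]⟩

theorem singles {V E K : Type*} {G : Multigraph V E} {c : E → K} {t : K → E}
    (hK : G.Kempe c t) (hnf : ∀ v, ¬ G.Full c v) (i : K) (hi : ∀ f, c f = i → f = t i) :
    G.Good t := by
  obtain ⟨x, y, hxy, he⟩ := G.exists_ends (t i)
  have hmeet : ∀ f, x ∈ G.ends f ∨ y ∈ G.ends f := by
    intro f
    by_cases hf : c f = i
    · rw [hi f hf, he]; simp
    · obtain ⟨g, hg, v, hv, hv'⟩ := hK.exists_inc f i hf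
      rw [hi g hg, he] at hv'
      rcases Sym2.mem_iff.mp hv' with rfl | rfl
      · exact Or.inl hv
      · exact Or.inr hv
  have hx := hnf x
  have hy := hnf y
  simp only [Full, not_forall, not_exists, not_and] at hx hy
  obtain ⟨l, hl⟩ := hx
  obtain ⟨m, hm⟩ := hy
  have hly : ∀ f, c f = l → y ∈ G.ends f := fun f hf => (hmeet f).resolve_left (hl f hf)
  have hmx : ∀ f, c f = m → x ∈ G.ends f := fun f hf => (hmeet f).resolve_right (hm f hf)
  have hl1 : ∀ f, c f = l → f = t l := fun f hf =>
    hK.hm _ _ (by rw [hf, hK.ht]) ⟨y, hly f hf, hly _ (hK.ht l)⟩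
  have hm1 : ∀ f, c f = m → f = t m := fun f hf =>
    hK.hm _ _ (by rw [hf, hK.ht]) ⟨x, hmx f hf, hmx _ (hK.ht m)⟩
  have hlm : l ≠ m := by
    rintro rfl
    exact hm _ (hK.ht l) (hly _ (hK.ht l))
  obtain ⟨z, hyz, hez⟩ := G.ends_of_mem (hly _ (hK.ht l))
  obtain ⟨z', hxz, hez'⟩ := G.ends_of_mem (hmx _ (hK.ht m))
  have hzz : z = z' := by
    obtain ⟨g, hg, v, hv, hv'⟩ := hK.exists_inc (t l) m (by rw [hK.ht]; exact hlm)
    rw [hm1 g hg] at hv'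
    have h1 := hl _ (hK.ht l)
    have h2 := hm _ (hK.ht m)
    rw [hez] at hv h1
    rw [hez'] at hv' h2
    simp only [Sym2.mem_iff, not_or] at hv hv' h1 h2
    rcases hv with rfl | rfl
    · exact absurd hv' (by tauto)
    · rcases hv' with rfl | rfl
      · exact absurd rfl h1.2
      · rfl
  subst hzz
  have hmeet2 : ∀ f, y ∈ G.ends f ∨ z ∈ G.ends f := by
    intro f
    by_cases hf : c f = l
    · rw [hl1 f hf, hez]; simp
    · obtain ⟨g, hg, v, hv, hv'⟩ := hK.exists_inc f l hf
      rw [hl1 g hg, hez] at hv'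
      rcases Sym2.mem_iff.mp hv' with rfl | rfl
      · exact Or.inl hv
      · exact Or.inr hv
  have hmeet3 : ∀ f, x ∈ G.ends f ∨ z ∈ G.ends f := by
    intro f
    by_cases hf : c f = m
    · rw [hm1 f hf, hez']; simp
    · obtain ⟨g, hg, v, hv, hv'⟩ := hK.exists_inc f m hf
      rw [hm1 g hg, hez'] at hv'
      rcases Sym2.mem_iff.mp hv' with rfl | rfl
      · exact Or.inl hv
      · exact Or.inr hv
  have hall : ∀ f g, G.Inc f g := by
    intro f g
    have h1 := hmeet f
    have h2 := hmeet2 f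
    have h3 := hmeet3 f
    have h4 := hmeet g
    have h5 := hmeet2 g
    have h6 := hmeet3 g
    have : (x ∈ G.ends f ∧ x ∈ G.ends g) ∨ (y ∈ G.ends f ∧ y ∈ G.ends g) ∨
      (z ∈ G.ends f ∧ z ∈ G.ends g) := by tauto
    rcases this with h | h | h
    · exact ⟨_, h⟩
    · exact ⟨_, h⟩
    · exact ⟨_, h⟩
  refine ⟨fun i => {t i}, fun i => rfl, fun i => KConn.singleton _ _, ?_, ?_⟩
  · intro i j hij
    rw [Set.disjoint_singleton]
    intro h
    exact hij (by rw [← hK.ht i, ← hK.ht j, h])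
  · intro i j _
    exact ⟨t i, rfl, t j, rfl, hall _ _⟩

theorem ends_inj {V E K : Type*} {G : Multigraph V E} {c : E → K} {t : K → E}
    (hK : G.Kempe c t) (h2 : ∀ e, ∃ f, c f = c e ∧ f ≠ e) : Function.Injective G.ends := by
  intro e f hef
  by_contra hne
  have hinc : G.Inc e f := by
    obtain ⟨v, hv⟩ := G.exists_end e
    exact ⟨v, hv, hef ▸ hv⟩
  have hc : c e ≠ c f := fun h => hne (hK.hm _ _ h hinc)
  obtain ⟨g, hg, hge⟩ := h2 e
  have hall : ∀ g, ReflTransGen (fun a b => (c a = c e ∨ c a = c f) ∧ (c b = c e ∨ c b = c f) ∧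
      G.Inc a b) e g → g = e ∨ g = f := by
    intro g hg
    induction hg with
    | refl => exact Or.inl rfl
    | @tail x y _ h ih =>
      have hxe : G.ends x = G.ends e := by
        rcases ih with rfl | rfl
        · rfl
        · exact hef.symm
      obtain ⟨v, hv, hv'⟩ := h.2.2
      rcases h.2.1 with h' | h'
      · exact Or.inl (hK.hm _ _ h' ⟨v, hv', hxe ▸ hv⟩)
      · exact Or.inr (hK.hm _ _ h' ⟨v, hv', by rw [← hef, ← hxe]; exact hv⟩)
  rcases hall g (hK.hc _ _ hc e g (Or.inl rfl) (Or.inl hg)) with h | h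
  · exact hge h
  · exact hc (by rw [← hg, h])

def Has {V E K : Type*} (G : Multigraph V E) (c : E → K) (v : V) (i : K) : Prop :=
  ∃ e, c e = i ∧ v ∈ G.ends e

open Classical in
noncomputable def verts {V E : Type*} (G : Multigraph V E) (e : E) : Finset V := (G.ends e).toFinset

theorem mem_verts {V E : Type*} (G : Multigraph V E) (e : E) (v : V) :
    v ∈ G.verts e ↔ v ∈ G.ends e := by
  simp [verts]

theorem card_verts {V E : Type*} (G : Multigraph V E) (e : E) : (G.verts e).card = 2 := by
  classical
  obtain ⟨x, y, hxy, h⟩ := G.exists_ends e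
  have : G.verts e = {x, y} := by
    ext v
    rw [mem_verts, h]
    simp
  rw [this, Finset.card_pair hxy]

open Classical in
theorem card_biUnion_le {V E : Type*} [Fintype E] (G : Multigraph V E) (M : Finset E)
    (hM : M.Nonempty) (hc : ∀ e ∈ M, ∀ f ∈ M,
      ReflTransGen (fun a b => a ∈ M ∧ b ∈ M ∧ G.Inc a b) e f) :
    (M.biUnion G.verts).card ≤ M.card + 1 := by
  obtain ⟨e0, he0⟩ := hM
  set S := M.powerset.filter (fun F => F.Nonempty ∧ (F.biUnion G.verts).card ≤ F.card + 1) with hS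
  have hSne : S.Nonempty := by
    refine ⟨{e0}, ?_⟩
    simp [hS, he0, card_verts]
  obtain ⟨F, hFS, hmax⟩ := Finset.exists_max_image S Finset.card hSne
  simp only [hS, Finset.mem_filter, Finset.mem_powerset] at hFS
  obtain ⟨hFM, ⟨f0, hf0⟩, hFc⟩ := hFS
  suffices h : F = M by rw [← h]; exact hFc
  by_contra hne
  -- no edge of M outside F is incident with F
  have hno : ∀ x ∈ F, ∀ y ∈ M, G.Inc x y → y ∈ F := by
    rintro x hx y hy ⟨v, hvx, hvy⟩
    by_contra hyF
    have hle := hmax (insert y F) (by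
      simp only [hS, Finset.mem_filter, Finset.mem_powerset]
      refine ⟨Finset.insert_subset hy hFM, ⟨y, by simp⟩, ?_⟩
      rw [Finset.card_insert_of_notMem hyF, Finset.biUnion_insert]
      have h1 := Finset.card_union_add_card_inter (G.verts y) (F.biUnion G.verts)
      have h2 : 0 < (G.verts y ∩ F.biUnion G.verts).card := by
        apply Finset.card_pos.mpr
        refine ⟨v, ?_⟩
        simp only [Finset.mem_inter, Finset.mem_biUnion, mem_verts]
        exact ⟨hvy, x, hx, hvx⟩
      rw [card_verts] at h1
      omega)
    rw [Finset.card_insert_of_notMem hyF] at hle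
    omega
  apply hne
  apply Finset.Subset.antisymm hFM
  intro g hg
  have := hc f0 (hFM hf0) g hg
  induction this with
  | refl => exact hf0
  | tail _ h ih => exact hno _ (ih h.1) _ h.2.1 h.2.2

open Classical in
theorem card_xor {V E K : Type*} [Fintype V] [Fintype E] {G : Multigraph V E} {c : E → K}
    {t : K → E} (hK : G.Kempe c t) (i j : K) (hij : i ≠ j) :
    (Finset.univ.filter (fun v => ¬ (G.Has c v i ↔ G.Has c v j))).card ≤ 2 := by
  set M := Finset.univ.filter (fun e => c e = i ∨ c e = j) with hM
  have h1 := card_biUnion_le G M ⟨t i, by simp [hM, hK.ht]⟩ (by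
    intro e he f hf
    simp only [hM, Finset.mem_filter, Finset.mem_univ, true_and] at he hf ⊢
    exact hK.hc i j hij e f he hf)
  have h2 : ∑ v : V, (M.filter (fun e => v ∈ G.verts e)).card = 2 * M.card := by
    have := Finset.sum_card_bipartiteAbove_eq_sum_card_bipartiteBelow
      (s := (Finset.univ : Finset V)) (t := M) (fun v e => v ∈ G.verts e)
    simp only [Finset.bipartiteAbove, Finset.bipartiteBelow] at this
    rw [this]
    simp [card_verts, mul_comm]
  have hone : ∀ (v : V) (i : K), (Finset.univ.filter (fun e => c e = i ∧ v ∈ G.verts e)).card =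
      if G.Has c v i then 1 else 0 := by
    intro v i
    split_ifs with h
    · obtain ⟨e, he, hv⟩ := h
      rw [Finset.card_eq_one]
      refine ⟨e, ?_⟩
      ext f
      simp only [Finset.mem_filter, Finset.mem_univ, true_and, Finset.mem_singleton, mem_verts]
      constructor
      · rintro ⟨h, h'⟩
        exact hK.hm _ _ (h.trans he.symm) ⟨v, h', hv⟩
      · rintro rfl
        exact ⟨he, hv⟩
    · rw [Finset.card_eq_zero, Finset.filter_eq_empty_iff]
      rintro e - ⟨h1, h2⟩
      exact h ⟨e, h1, (mem_verts G e v).mp h2⟩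
  have h3 : ∀ v : V, (M.filter (fun e => v ∈ G.verts e)).card =
      (if G.Has c v i then 1 else 0) + (if G.Has c v j then 1 else 0) := by
    intro v
    rw [← hone, ← hone, ← Finset.card_union_of_disjoint]
    · congr 1
      ext e
      simp [hM]
      tauto
    · rw [Finset.disjoint_left]
      simp only [Finset.mem_filter, Finset.mem_univ, true_and]
      rintro e ⟨h, -⟩ ⟨h', -⟩
      exact hij (h.symm.trans h')
  have h4 : M.biUnion G.verts = Finset.univ.filter (fun v => G.Has c v i ∨ G.Has c v j) := by
    ext v
    simp only [Finset.mem_biUnion, hM, Finset.mem_filter, Finset.mem_univ, true_and, mem_verts]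
    constructor
    · rintro ⟨e, h | h, hv⟩
      · exact Or.inl ⟨e, h, hv⟩
      · exact Or.inr ⟨e, h, hv⟩
    · rintro (⟨e, h, hv⟩ | ⟨e, h, hv⟩)
      · exact ⟨e, Or.inl h, hv⟩
      · exact ⟨e, Or.inr h, hv⟩
  rw [h4, Finset.card_filter] at h1
  rw [Finset.card_filter]
  have h5 : ∑ v : V, ((if G.Has c v i then 1 else 0) + (if G.Has c v j then 1 else 0)) +
      ∑ v : V, (if ¬ (G.Has c v i ↔ G.Has c v j) then 1 else 0) =
      2 * ∑ v : V, (if G.Has c v i ∨ G.Has c v j then 1 else 0) := by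
    rw [← Finset.sum_add_distrib, Finset.mul_sum]
    apply Finset.sum_congr rfl
    intro v _
    by_cases h : G.Has c v i <;> by_cases h' : G.Has c v j <;> simp [h, h']
  have h6 : ∑ v : V, ((if G.Has c v i then 1 else 0) + (if G.Has c v j then 1 else 0)) =
      2 * M.card := by
    rw [← h2]
    exact Finset.sum_congr rfl (fun v _ => (h3 v).symm)
  omega

open Classical in
theorem counting {V K : Type*} [Fintype K] (H : V → K → Prop) (W : Finset V) (i0 : K)
    (hx : ∀ i j, i ≠ j → (W.filter (fun v => ¬ (H v i ↔ H v j))).card ≤ 2)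
    (hd2 : ∀ v ∈ W, 2 ≤ (Finset.univ.filter (fun i => H v i)).card)
    (hdk : ∀ v ∈ W, (Finset.univ.filter (fun i => H v i)).card + 1 ≤ Fintype.card K)
    (hdn : ∀ v ∈ W, (Finset.univ.filter (fun i => H v i)).card + 1 ≤ W.card)
    (ha : ∀ i, 4 ≤ (W.filter (fun v => H v i)).card) :
    W.card = Fintype.card K ∧
      ∀ v ∈ W, (Finset.univ.filter (fun i => H v i)).card + 1 = W.card := by
  set d : V → ℕ := fun v => (Finset.univ.filter (fun i => H v i)).card with hd
  set u : V → ℕ := fun v => (Finset.univ.filter (fun i => ¬ H v i)).card with hu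
  set k := Fintype.card K with hk
  set n := W.card with hn
  have hdu : ∀ v, d v + u v = k := by
    intro v
    have := Finset.card_filter_add_card_filter_not (s := (Finset.univ : Finset K)) (fun i => H v i)
    simpa [hd, hu, hk] using this
  have hI : ∀ i, ∑ v ∈ W, (if H v i then u v else d v) ≤ 2 * (k - 1) := by
    intro i
    have h1 : ∀ v, (if H v i then u v else d v) =
        ∑ j : K, (if ¬ (H v i ↔ H v j) then 1 else 0) := by
      intro v
      rw [← Finset.card_filter]
      by_cases h : H v i
      · simp [h, hu]
      · simp [h, hd]
    simp_rw [h1]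
    rw [Finset.sum_comm]
    have h2 : ∀ j ∈ (Finset.univ : Finset K),
        ∑ v ∈ W, (if ¬ (H v i ↔ H v j) then 1 else 0) ≤ (if j ∈ Finset.univ.erase i then 2 else 0) := by
      intro j _
      rw [← Finset.card_filter]
      by_cases hij : i = j
      · subst hij; simp
      · rw [if_pos (by simp [Ne.symm hij])]
        exact hx i j hij
    refine (Finset.sum_le_sum h2).trans ?_
    rw [Finset.sum_ite_mem, Finset.univ_inter, Finset.sum_const, Finset.card_erase_of_mem (Finset.mem_univ _),
      Finset.card_univ]
    simp [hk, mul_comm]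
  have hWne : W.Nonempty := by
    have := ha i0
    obtain ⟨v, hv⟩ := Finset.card_pos.mp (lt_of_lt_of_le (by norm_num) this)
    exact ⟨v, (Finset.mem_filter.mp hv).1⟩
  obtain ⟨v0, hv0⟩ := hWne
  have hk3 : 3 ≤ k := by have := hd2 v0 hv0; have := hdk v0 hv0; omega
  by_cases hnk : n < k
  · exfalso
    obtain ⟨q, hq⟩ : ∃ q, q + n = k + 1 := ⟨k + 1 - n, by omega⟩
    have hlow : ∀ i, ∑ v ∈ W, (if H v i then q else 2) ≤ ∑ v ∈ W, (if H v i then u v else d v) := by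
      intro i
      refine Finset.sum_le_sum (fun v hv => ?_)
      split_ifs
      · have := hdn v hv; have := hdu v; simp only [hd] at *; omega
      · exact hd2 v hv
    have hq2 : q = 2 := by
      have h1 := (hlow i0).trans (hI i0)
      rw [Finset.sum_ite, Finset.sum_const, Finset.sum_const] at h1
      have h2 := Finset.card_filter_add_card_filter_not (s := W) (fun v => H v i0)
      have h3 := ha i0
      simp only [smul_eq_mul] at h1
      set a := (W.filter (fun v => H v i0)).card
      set b := (W.filter (fun v => ¬ H v i0)).card
      have hq2 : 2 ≤ q := by omega
      by_contra hne
      obtain ⟨p, rfl⟩ : ∃ p, q = p + 3 := ⟨q - 3, by omega⟩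
      obtain ⟨a', h⟩ : ∃ a', a = a' + 4 := ⟨a - 4, by omega⟩
      rw [h] at h1 h2
      have : 2 * (k - 1) = 2 * (p + 1 + n) := by omega
      rw [this, hn, ← h2] at h1
      nlinarith [Nat.zero_le (a' * p)]
    subst hq2
    have heq : ∀ i, ∀ v ∈ W, (if H v i then 2 else 2) = (if H v i then u v else d v) := by
      intro i
      refine (Finset.sum_eq_sum_iff_of_le (fun v hv => ?_)).mp ?_
      · split_ifs
        · have := hdn v hv; have := hdu v; simp only [hd] at *; omega
        · exact hd2 v hv
      · refine le_antisymm (hlow i) ((hI i).trans ?_)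
        simp
        omega
    have hu2 : u v0 = 2 := by
      obtain ⟨i, hi⟩ := Finset.card_pos.mp (lt_of_lt_of_le (by norm_num) (hd2 v0 hv0))
      have hi := (Finset.mem_filter.mp hi).2
      have := heq i v0 hv0
      simpa [hi] using this.symm
    have hd2' : d v0 = 2 := by
      obtain ⟨i, hi⟩ := Finset.card_pos.mp (show 0 < u v0 by omega)
      have hi := (Finset.mem_filter.mp hi).2
      have := heq i v0 hv0
      simpa [hi] using this.symm
    have h1 := hdu v0
    have h2 := ha i0
    have h3 : (W.filter (fun v => H v i0)).card ≤ n := Finset.card_filter_le _ _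
    omega
  · have hprod : ∀ v ∈ W, k - 1 ≤ d v * u v := by
      intro v hv
      have h1 : 2 ≤ d v := hd2 v hv
      have h2 : d v + 1 ≤ k := hdk v hv
      have h3 := hdu v
      obtain ⟨x, hx⟩ : ∃ x, d v = x + 1 := ⟨d v - 1, by omega⟩
      obtain ⟨y, hy⟩ : ∃ y, u v = y + 1 := ⟨u v - 1, by omega⟩
      rw [hx, hy] at h3 ⊢
      have : k - 1 = x + y + 1 := by omega
      rw [this]; nlinarith [Nat.zero_le (x * y)]
    have hsum : ∑ v ∈ W, d v * u v ≤ k * (k - 1) := by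
      have h1 : ∑ i : K, ∑ v ∈ W, (if H v i then u v else d v) ≤ k * (2 * (k - 1)) := by
        refine (Finset.sum_le_card_nsmul _ _ _ (fun i _ => hI i)).trans ?_
        simp [hk]
      rw [Finset.sum_comm] at h1
      have h2 : ∀ v ∈ W, ∑ i : K, (if H v i then u v else d v) = 2 * (d v * u v) := by
        intro v _
        rw [Finset.sum_ite, Finset.sum_const, Finset.sum_const]
        simp only [smul_eq_mul, hd, hu]; ring
      rw [Finset.sum_congr rfl h2, ← Finset.mul_sum] at h1
      nlinarith
    have hlow : n * (k - 1) ≤ ∑ v ∈ W, d v * u v := by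
      have := Finset.card_nsmul_le_sum W _ _ hprod
      simpa using this
    have hnk' : n = k := by
      have := hlow.trans hsum
      have := Nat.le_of_mul_le_mul_right this (by omega)
      omega
    refine ⟨hnk', ?_⟩
    have heq := (Finset.sum_eq_sum_iff_of_le hprod).mp (by
      refine le_antisymm (Finset.sum_le_sum hprod) ?_
      rw [Finset.sum_const, smul_eq_mul, ← hn, hnk']; exact hsum)
    intro v hv
    have h1 : 2 ≤ d v := hd2 v hv
    have h2 : d v + 1 ≤ k := hdk v hv
    have h3 := hdu v
    have h4 := heq v hv
    obtain ⟨x, hx⟩ : ∃ x, d v = x + 2 := ⟨d v - 2, by omega⟩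
    obtain ⟨y, hy⟩ : ∃ y, u v = y + 1 := ⟨u v - 1, by omega⟩
    have h5 : k - 1 = x + y + 2 := by omega
    rw [hx, hy, h5] at h4
    have : y = 0 := by nlinarith [Nat.zero_le (x * y)]
    change d v + 1 = n
    omega

open Classical in
/-- no full vertex, no singleton class: the graph is complete. -/
theorem complete_of {V E K : Type*} [Fintype V] [Fintype E] [Fintype K] [Nontrivial K]
    {G : Multigraph V E} {c : E → K}
    {t : K → E} (hK : G.Kempe c t) (hnf : ∀ v, ¬ G.Full c v)
    (h2 : ∀ e, ∃ f, c f = c e ∧ f ≠ e) :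
    ∃ W : Finset V, W.card = Fintype.card K ∧ (∀ e, ∀ v ∈ G.ends e, v ∈ W) ∧
      ∀ v ∈ W, ∀ w ∈ W, v ≠ w → ∃ e, G.ends e = s(v, w) := by
  have hinj := ends_inj hK h2
  set W : Finset V := Finset.univ.filter (fun v => ∃ e, v ∈ G.ends e) with hW
  have hHW : ∀ v i, G.Has c v i → v ∈ W := by
    rintro v i ⟨e, -, he⟩
    simp only [hW, Finset.mem_filter, Finset.mem_univ, true_and]
    exact ⟨e, he⟩
  obtain ⟨i0⟩ : Nonempty K := inferInstance
  -- injection of colours at `v` into the other vertices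
  have hch : ∀ v i, ∃ w, G.Has c v i → w ∈ W.erase v ∧ ∃ e, c e = i ∧ G.ends e = s(v, w) := by
    intro v i
    by_cases h : G.Has c v i
    · obtain ⟨e, he, hv⟩ := h
      obtain ⟨y, hy, hey⟩ := G.ends_of_mem hv
      refine ⟨y, fun _ => ⟨?_, e, he, hey⟩⟩
      rw [Finset.mem_erase]
      exact ⟨hy.symm, hHW y i ⟨e, he, by rw [hey]; simp⟩⟩
    · exact ⟨v, fun h' => absurd h' h⟩
  choose g hg using hch
  have hginj : ∀ v, Set.InjOn (g v) (Finset.univ.filter (fun i => G.Has c v i) : Finset K) := by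
    intro v i hi j hj hij
    simp only [Finset.coe_filter, Finset.mem_univ, true_and, Set.mem_ofPred_eq] at hi hj
    obtain ⟨-, e, he, hev⟩ := hg v i hi
    obtain ⟨-, f, hf, hfv⟩ := hg v j hj
    rw [hij, ← hfv] at hev
    rw [← he, ← hf, hinj hev]
  have himg : ∀ v, (Finset.univ.filter (fun i => G.Has c v i)).image (g v) ⊆ W.erase v := by
    intro v w hw
    simp only [Finset.mem_image, Finset.mem_filter, Finset.mem_univ, true_and] at hw
    obtain ⟨i, hi, rfl⟩ := hw
    exact (hg v i hi).1
  have hcard : ∀ v, ((Finset.univ.filter (fun i => G.Has c v i)).image (g v)).card =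
      (Finset.univ.filter (fun i => G.Has c v i)).card := fun v =>
    Finset.card_image_of_injOn (hginj v)
  have hcnt := counting (fun v i => G.Has c v i) W i0 ?_ ?_ ?_ ?_ ?_
  · obtain ⟨h1, h3⟩ := hcnt
    refine ⟨W, h1, ?_, ?_⟩
    · intro e v hv
      exact hHW v (c e) ⟨e, rfl, hv⟩
    · intro v hv w hw hvw
      have h4 : (Finset.univ.filter (fun i => G.Has c v i)).image (g v) = W.erase v := by
        apply Finset.eq_of_subset_of_card_le (himg v)
        rw [hcard, Finset.card_erase_of_mem hv]
        have := h3 v hv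
        omega
      have h5 : w ∈ W.erase v := Finset.mem_erase.mpr ⟨hvw.symm, hw⟩
      rw [← h4] at h5
      simp only [Finset.mem_image, Finset.mem_filter, Finset.mem_univ, true_and] at h5
      obtain ⟨i, hi, rfl⟩ := h5
      obtain ⟨-, e, -, he⟩ := hg v i hi
      exact ⟨e, he⟩
  · intro i j hij
    refine le_trans (Finset.card_le_card ?_) (card_xor hK i j hij)
    exact Finset.filter_subset_filter _ (Finset.subset_univ _)
  · intro v hv
    simp only [hW, Finset.mem_filter, Finset.mem_univ, true_and] at hv
    obtain ⟨e, he⟩ := hv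
    by_contra hlt
    have honly : ∀ f, v ∈ G.ends f → c f = c e := by
      intro f hf
      by_contra hne
      apply hlt
      have : ({c f, c e} : Finset K) ⊆ Finset.univ.filter (fun i => G.Has c v i) := by
        intro i hi
        simp only [Finset.mem_insert, Finset.mem_singleton] at hi
        simp only [Finset.mem_filter, Finset.mem_univ, true_and]
        rcases hi with rfl | rfl
        · exact ⟨f, rfl, hf⟩
        · exact ⟨e, rfl, he⟩
      have := Finset.card_le_card this
      rwa [Finset.card_pair hne] at this
    obtain ⟨y, hy, hey⟩ := G.ends_of_mem he
    apply hnf y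
    intro i
    by_cases hi : c e = i
    · exact ⟨e, hi, by rw [hey]; simp⟩
    · obtain ⟨f, hf, w, hwe, hwf⟩ := hK.exists_inc e i hi
      rw [hey, Sym2.mem_iff] at hwe
      rcases hwe with rfl | rfl
      · exact absurd ((honly f hwf).symm.trans hf) hi
      · exact ⟨f, hf, hwf⟩
  · intro v hv
    have : (Finset.univ.filter (fun i => G.Has c v i)).card < (Finset.univ : Finset K).card := by
      apply Finset.card_lt_card
      rw [Finset.filter_ssubset]
      by_contra hno
      push Not at hno
      exact hnf v (fun i => hno i (Finset.mem_univ _))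
    exact this
  · intro v hv
    have := Finset.card_le_card (himg v)
    rw [hcard, Finset.card_erase_of_mem hv] at this
    have : 0 < W.card := Finset.card_pos.mpr ⟨v, hv⟩
    omega
  · intro i
    obtain ⟨f, hf, hne⟩ := h2 (t i)
    rw [hK.ht] at hf
    have hsub : G.verts f ∪ G.verts (t i) ⊆ W.filter (fun v => G.Has c v i) := by
      intro v hv
      rw [Finset.mem_union, mem_verts, mem_verts] at hv
      have : G.Has c v i := by
        rcases hv with h | h
        · exact ⟨f, hf, h⟩
        · exact ⟨t i, hK.ht i, h⟩
      exact Finset.mem_filter.mpr ⟨hHW _ _ this, this⟩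
    have hdis : Disjoint (G.verts f) (G.verts (t i)) := by
      rw [Finset.disjoint_left]
      intro v h h'
      rw [mem_verts] at h h'
      exact hne (hK.hm _ _ (by rw [hf, hK.ht]) ⟨v, h, h'⟩)
    have := Finset.card_le_card hsub
    rwa [Finset.card_union_of_disjoint hdis, card_verts, card_verts] at this

/-- A labelling of the transversal by the vertices of `W`, relative to `Z`. -/
structure Lab {V E K : Type*} (G : Multigraph V E) (t : K → E) (W Z : Finset V) (β : K → V) :
    Prop where
  inj : Function.Injective β
  mem : ∀ i, β i ∈ W
  surj : ∀ w ∈ W, ∃ i, β i = w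
  sub : Z ⊆ W
  hA : ∀ i, β i ∈ Z → (∀ v ∈ G.ends (t i), v ∈ Z) ∧ β i ∈ G.ends (t i)
  hB : ∀ i, β i ∉ Z → β i ∈ G.ends (t i) ∨ ∀ v ∈ G.ends (t i), v ∈ Z

theorem exists_lab {V E K : Type*} [Fintype K] (G : Multigraph V E) (t : K → E) (W : Finset V)
    (hcard : W.card = Fintype.card K) (hW : ∀ e, ∀ v ∈ G.ends e, v ∈ W) :
    ∃ Z β, G.Lab t W Z β := by
  classical
  set TZ : Finset V → Finset K := fun Z => Finset.univ.filter (fun i => ∀ v ∈ G.ends (t i), v ∈ Z)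
    with hTZ
  have hmT : ∀ Z i, i ∈ TZ Z ↔ ∀ v ∈ G.ends (t i), v ∈ Z := by
    intro Z i; simp [hTZ]
  obtain ⟨Z, hZW, hmax⟩ := Finset.exists_max_image W.powerset
    (fun Z => ((TZ Z).card : ℤ) - (Z.card : ℤ)) ⟨∅, by simp⟩
  rw [Finset.mem_powerset] at hZW
  have hall1 : ∃ τ : Z → K, Function.Injective τ ∧ ∀ z : Z,
      τ z ∈ (TZ Z).filter (fun i => (z : V) ∈ G.ends (t i)) := by
    rw [← Finset.all_card_le_biUnion_card_iff_exists_injective]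
    intro s
    set S : Finset V := s.map (Function.Embedding.subtype _) with hS
    have hSc : S.card = s.card := Finset.card_map _
    have hSZ : S ⊆ Z := by
      intro v hv
      rw [hS, Finset.mem_map] at hv
      obtain ⟨x, -, rfl⟩ := hv
      exact x.2
    have h1 := hmax (Z \ S) (Finset.mem_powerset.mpr (Finset.sdiff_subset.trans hZW))
    have h2 : (Z \ S).card + S.card = Z.card := Finset.card_sdiff_add_card_eq_card hSZ
    have h3 : TZ Z ⊆ TZ (Z \ S) ∪
        s.biUnion (fun z => (TZ Z).filter (fun i => (z : V) ∈ G.ends (t i))) := by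
      intro i hi
      by_cases h : ∃ v ∈ G.ends (t i), v ∈ S
      · obtain ⟨v, hv, hvS⟩ := h
        rw [hS, Finset.mem_map] at hvS
        obtain ⟨x, hx, rfl⟩ := hvS
        exact Finset.mem_union_right _ (Finset.mem_biUnion.mpr ⟨x, hx,
          Finset.mem_filter.mpr ⟨hi, hv⟩⟩)
      · push Not at h
        refine Finset.mem_union_left _ ((hmT _ _).mpr (fun v hv => ?_))
        exact Finset.mem_sdiff.mpr ⟨(hmT _ _).mp hi v hv, h v hv⟩
    have h4 := (Finset.card_le_card h3).trans (Finset.card_union_le _ _)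
    omega
  have hall2 : ∃ φ : {i // i ∉ TZ Z} → V, Function.Injective φ ∧ ∀ i : {i // i ∉ TZ Z},
      φ i ∈ (G.verts (t i)) \ Z := by
    rw [← Finset.all_card_le_biUnion_card_iff_exists_injective]
    intro s
    set R : Finset K := s.map (Function.Embedding.subtype _) with hR
    have hRc : R.card = s.card := Finset.card_map _
    set N := s.biUnion (fun i => (G.verts (t i)) \ Z) with hN
    have hNW : N ⊆ W := by
      intro v hv
      rw [hN, Finset.mem_biUnion] at hv
      obtain ⟨i, -, hv⟩ := hv
      rw [Finset.mem_sdiff, mem_verts] at hv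
      exact hW _ _ hv.1
    have h1 := hmax (Z ∪ N) (Finset.mem_powerset.mpr (Finset.union_subset hZW hNW))
    have h2 := Finset.card_union_le Z N
    have h3 : TZ Z ∪ R ⊆ TZ (Z ∪ N) := by
      intro i hi
      rw [hmT]
      intro v hv
      rcases Finset.mem_union.mp hi with h | h
      · exact Finset.mem_union_left _ ((hmT _ _).mp h v hv)
      · rw [hR, Finset.mem_map] at h
        obtain ⟨x, hx, rfl⟩ := h
        by_cases hvZ : v ∈ Z
        · exact Finset.mem_union_left _ hvZ
        · refine Finset.mem_union_right _ (Finset.mem_biUnion.mpr ⟨x, hx, ?_⟩)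
          rw [Finset.mem_sdiff, mem_verts]
          exact ⟨hv, hvZ⟩
    have h4 : Disjoint (TZ Z) R := by
      rw [Finset.disjoint_right]
      intro i h
      rw [hR, Finset.mem_map] at h
      obtain ⟨x, hx, rfl⟩ := h
      exact x.2
    have h5 := Finset.card_le_card h3
    rw [Finset.card_union_of_disjoint h4] at h5
    omega
  obtain ⟨τ, hτ, hτm⟩ := hall1
  obtain ⟨φ, hφ, hφm⟩ := hall2
  have hf : ∀ i : K, ∃ v : V, (∀ h : i ∉ TZ Z, v = φ ⟨i, h⟩) ∧
      (∀ z, i = τ z → v = z) := by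
    intro i
    by_cases h : i ∈ TZ Z
    · by_cases h' : ∃ z, i = τ z
      · obtain ⟨z, hz⟩ := h'
        refine ⟨z, fun h' => absurd h h', fun z' hz' => ?_⟩
        rw [hτ (hz.symm.trans hz')]
      · push Not at h'
        obtain ⟨v, hv⟩ := G.exists_end (t i)
        exact ⟨v, fun h' => absurd h h', fun z hz => absurd hz (h' z)⟩
    · refine ⟨φ ⟨i, h⟩, fun _ => rfl, fun z hz => ?_⟩
      exact absurd (hz ▸ (Finset.mem_filter.mp (hτm z)).1) h
  choose f hf1 hf2 using hf
  set s : Finset K := (TZ Z)ᶜ ∪ Finset.univ.image τ with hs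
  have hsφ : ∀ i (h : i ∉ TZ Z), f i ∈ G.ends (t i) ∧ f i ∉ Z := by
    intro i h
    have := hφm ⟨i, h⟩
    rw [Finset.mem_sdiff, mem_verts, ← hf1 i h] at this
    exact this
  have hsτ : ∀ z, f (τ z) = z := fun z => hf2 _ z rfl
  have hfW : ∀ i, i ∈ s → f i ∈ W := by
    intro i hi
    rw [hs, Finset.mem_union, Finset.mem_compl, Finset.mem_image] at hi
    rcases hi with hi | ⟨z, -, rfl⟩
    · exact hW _ _ (hsφ i hi).1
    · rw [hsτ]; exact hZW z.2
  have hfinj : Set.InjOn f s := by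
    intro i hi j hj hij
    rw [Finset.mem_coe, hs, Finset.mem_union, Finset.mem_compl, Finset.mem_image] at hi hj
    rcases hi with hi | ⟨z, -, rfl⟩ <;> rcases hj with hj | ⟨z', -, rfl⟩
    · rw [hf1 i hi, hf1 j hj] at hij
      exact congrArg Subtype.val (hφ hij)
    · exact absurd (by rw [hij, hsτ]; exact z'.2) (hsφ i hi).2
    · exact absurd (by rw [← hij, hsτ]; exact z.2) (hsφ j hj).2
    · rw [hsτ, hsτ] at hij
      rw [Subtype.ext hij]
  obtain ⟨g, hg⟩ := Finset.exists_equiv_extend_of_card_eq (hcard.symm) (s := s) (f := f)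
    (by
      intro v hv
      rw [Finset.mem_image] at hv
      obtain ⟨i, hi, rfl⟩ := hv
      exact hfW i hi) hfinj
  have hgτ : ∀ z, (g (τ z) : V) = z := by
    intro z
    rw [hg _ (by rw [hs]; exact Finset.mem_union_right _ (Finset.mem_image_of_mem _ (Finset.mem_univ _))), hsτ]
  refine ⟨Z, fun i => g i, ⟨fun i j hij => g.injective (Subtype.ext hij), fun i => (g i).2, ?_, hZW, ?_, ?_⟩⟩
  · intro w hw
    exact ⟨g.symm ⟨w, hw⟩, by simp⟩
  · intro i hi
    have h1 := hgτ ⟨g i, hi⟩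
    have h2 : i = τ ⟨g i, hi⟩ := g.injective (Subtype.ext h1.symm)
    have h3 := Finset.mem_filter.mp (hτm ⟨g i, hi⟩)
    rw [← h2] at h3
    exact ⟨(hmT _ _).mp h3.1, h3.2⟩
  · intro i _
    by_cases h : i ∈ TZ Z
    · exact Or.inr ((hmT _ _).mp h)
    · left
      rw [hg i (by rw [hs]; exact Finset.mem_union_left _ (Finset.mem_compl.mpr h))]
      exact (hsφ i h).1

/-- swapping labels -/
theorem Lab.swap {V E K : Type*} [DecidableEq K] {G : Multigraph V E} {t : K → E} {W Z : Finset V}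
    {β : K → V} (h : G.Lab t W Z β) {m j : K} (hm : β m ∉ Z) (hmZ : ∀ v ∈ G.ends (t m), v ∈ Z)
    (hj : β j ∈ Z) (hjm : β j ∈ G.ends (t m)) : G.Lab t W Z (fun i => β (Equiv.swap m j i)) := by
  refine ⟨fun x y hxy => (Equiv.swap m j).injective (h.inj hxy), fun i => h.mem _, ?_, h.sub, ?_, ?_⟩
  · intro w hw
    obtain ⟨i, hi⟩ := h.surj w hw
    exact ⟨Equiv.swap m j i, by simpa using hi⟩
  · intro i hi
    by_cases h1 : i = m
    · subst h1
      simp only [Equiv.swap_apply_left] at hi ⊢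
      exact ⟨hmZ, hjm⟩
    · by_cases h2 : i = j
      · subst h2
        simp only [Equiv.swap_apply_right] at hi
        exact absurd hi hm
      · simp only [Equiv.swap_apply_of_ne_of_ne h1 h2] at hi ⊢
        exact h.hA i hi
  · intro i hi
    by_cases h1 : i = m
    · subst h1
      exact Or.inr hmZ
    · by_cases h2 : i = j
      · subst h2
        exact Or.inr (h.hA i hj).1
      · simp only [Equiv.swap_apply_of_ne_of_ne h1 h2] at hi ⊢
        exact h.hB i hi

theorem kconn_hub {V E : Type*} {G : Multigraph V E} {F : Set E} {f : E} (hf : f ∈ F)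
    (h : ∀ e ∈ F, G.Inc e f) : KConn G.Inc F := by
  intro e he e' he'
  exact (ReflTransGen.single ⟨he, hf, h e he⟩).tail ⟨hf, he', (h e' he').symm⟩

/-- ownership of edges -/
theorem exists_own {V E K : Type*} {G : Multigraph V E} {t : K → E} {W : Finset V} {β : K → V}
    (ht : Function.Injective t) (hs : ∀ w ∈ W, ∃ i, β i = w) (hW : ∀ e, ∀ v ∈ G.ends e, v ∈ W)
    (r : V → ℕ) : ∃ own : E → K, (∀ i, own (t i) = i) ∧
      ∀ e, (∃ i, t i = e) ∨ (β (own e) ∈ G.ends e ∧ ∀ y ∈ G.ends e, r y ≤ r (β (own e))) := by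
  have : ∀ e, ∃ k, (∀ i, t i = e → k = i) ∧
      ((∃ i, t i = e) ∨ (β k ∈ G.ends e ∧ ∀ y ∈ G.ends e, r y ≤ r (β k))) := by
    intro e
    by_cases h : ∃ i, t i = e
    · obtain ⟨i, hi⟩ := h
      exact ⟨i, fun j hj => ht (hi.trans hj.symm), Or.inl ⟨i, hi⟩⟩
    · obtain ⟨x, y, -, hxy⟩ := G.exists_ends e
      have : ∃ x ∈ G.ends e, ∀ y ∈ G.ends e, r y ≤ r x := by
        rcases le_total (r x) (r y) with hr | hr
        · refine ⟨y, by rw [hxy]; simp, fun z hz => ?_⟩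
          rw [hxy, Sym2.mem_iff] at hz
          rcases hz with rfl | rfl
          · exact hr
          · exact le_rfl
        · refine ⟨x, by rw [hxy]; simp, fun z hz => ?_⟩
          rw [hxy, Sym2.mem_iff] at hz
          rcases hz with rfl | rfl
          · exact le_rfl
          · exact hr
      obtain ⟨z, hz, hzm⟩ := this
      obtain ⟨i, rfl⟩ := hs z (hW e z hz)
      exact ⟨i, fun j hj => absurd ⟨j, hj⟩ h, Or.inr ⟨hz, hzm⟩⟩
  choose own h1 h2 using this
  exact ⟨own, fun i => h1 _ i rfl, h2⟩

theorem good_star {V E K : Type*} {G : Multigraph V E} {t : K → E} {W Z : Finset V} {β : K → V}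
    (ht : Function.Injective t) (hL : G.Lab t W Z β) (hW : ∀ e, ∀ v ∈ G.ends e, v ∈ W)
    (hcomp : ∀ v ∈ W, ∀ w ∈ W, v ≠ w → ∃ e, G.ends e = s(v, w))
    (hst : ∀ i, β i ∈ G.ends (t i)) : G.Good t := by
  obtain ⟨own, h1, h2⟩ := exists_own ht hL.surj hW (fun _ => 0)
  have h3 : ∀ e, β (own e) ∈ G.ends e := by
    intro e
    rcases h2 e with ⟨i, rfl⟩ | h
    · rw [h1]; exact hst i
    · exact h.1
  refine ⟨fun i => {e | own e = i}, h1, fun i => ?_, fun i j hij => ?_, fun i j hij => ?_⟩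
  · refine kconn_hub (f := t i) (h1 i) ?_
    rintro e rfl
    exact ⟨_, h3 e, hst _⟩
  · rw [Set.disjoint_left]
    rintro e rfl h
    exact hij h
  · obtain ⟨e, he⟩ := hcomp _ (hL.mem i) _ (hL.mem j) (fun h => hij (hL.inj h))
    have := h3 e
    rw [he, Sym2.mem_iff] at this
    rcases this with h | h
    · exact ⟨e, hL.inj h, t j, h1 j, β j, by rw [he]; simp, hst j⟩
    · exact ⟨t i, h1 i, e, hL.inj h, β i, hst i, by rw [he]; simp⟩

theorem good_lab {V E K : Type*} {G : Multigraph V E} {t : K → E} {W Z : Finset V} {β : K → V}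
    (ht : Function.Injective t) (hL : G.Lab t W Z β) (hW : ∀ e, ∀ v ∈ G.ends e, v ∈ W)
    (hcomp : ∀ v ∈ W, ∀ w ∈ W, v ≠ w → ∃ e, G.ends e = s(v, w))
    (i0 : K) (a b : V) (hab : G.ends (t i0) = s(a, b)) (ha : a ∈ Z) (hb : b ∈ Z)
    (hi0 : β i0 ∉ Z)
    (hD : ∀ w ∈ Z, w ≠ a → w ≠ b → ∀ m m', G.ends (t m) = s(w, a) → G.ends (t m') = s(w, b) →
      β m = w ∨ β m' = w) : G.Good t := by
  classical
  set r : V → ℕ := fun v => if v = β i0 then 0 else if v = a ∨ v = b then 1 else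
    if v ∈ Z then 2 else 3 with hr
  obtain ⟨own, h1, h2⟩ := exists_own ht hL.surj hW r
  have hr0 : r (β i0) = 0 := by simp [hr]
  have hrp : ∀ v, v ≠ β i0 → 1 ≤ r v := by
    intro v hv; simp only [hr]; rw [if_neg hv]; split_ifs <;> norm_num
  have hrab : ∀ v, v = a ∨ v = b → r v ≤ 1 := by
    intro v hv; simp only [hr]; split_ifs <;> norm_num
  have hrZ : ∀ v, v ∈ Z → r v ≤ 2 := by
    intro v hv; simp only [hr]; split_ifs <;> norm_num
  have hrZ2 : ∀ v, v ∈ Z → v ≠ a → v ≠ b → r v = 2 := by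
    intro v hv h3 h4
    have : v ≠ β i0 := fun h => hi0 (h ▸ hv)
    simp [hr, h3, h4, this, hv]
  have hr3 : ∀ v, v ∉ Z → v ≠ β i0 → r v = 3 := by
    intro v hv h
    have h3 : v ≠ a := fun h => hv (h ▸ ha)
    have h4 : v ≠ b := fun h => hv (h ▸ hb)
    simp [hr, h3, h4, h, hv]
  -- no transversal edge joins `Z` to an unlabelled vertex
  have hC : ∀ m i z, z ∈ Z → β i ∉ Z → (∀ v ∈ G.ends (t i), v ∈ Z) →
      G.ends (t m) = s(z, β i) → False := by
    intro m i z hz hi hiZ hm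
    have h3 : β m ∉ Z := fun h => hi ((hL.hA m h).1 (β i) (by rw [hm]; simp))
    rcases hL.hB m h3 with h4 | h4
    · rw [hm, Sym2.mem_iff] at h4
      rcases h4 with h4 | h4
      · exact h3 (h4 ▸ hz)
      · have := hL.inj h4
        subst this
        exact h3 (hiZ _ (by rw [hm]; simp))
    · exact hi (h4 _ (by rw [hm]; simp))
  have hi0Z : ∀ v ∈ G.ends (t i0), v ∈ Z := by
    intro v hv
    rw [hab, Sym2.mem_iff] at hv
    rcases hv with rfl | rfl <;> assumption
  -- owner of an edge joining vertices of distinct rank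
  have hown : ∀ e x i, G.ends e = s(x, β i) → (∀ m, t m ≠ e) → r x < r (β i) → own e = i := by
    intro e x i he hfree hlt
    rcases h2 e with ⟨m, hm⟩ | ⟨h3, h4⟩
    · exact absurd hm (hfree m)
    · have h5 := h4 (β i) (by rw [he]; simp)
      rw [he, Sym2.mem_iff] at h3
      rcases h3 with h3 | h3
      · rw [h3] at h5; omega
      · exact hL.inj h3
  have hstar : ∀ i, β i ∈ G.ends (t i) ∨ (β i ∉ Z ∧ ∀ v ∈ G.ends (t i), v ∈ Z) := by
    intro i
    by_cases h : β i ∈ Z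
    · exact Or.inl (hL.hA i h).2
    · rcases hL.hB i h with h' | h'
      · exact Or.inl h'
      · exact Or.inr ⟨h, h'⟩
  have hconn : ∀ i, i ≠ i0 → β i ∉ Z → (∀ v ∈ G.ends (t i), v ∈ Z) → ∀ z ∈ Z,
      ∃ f, own f = i ∧ G.ends f = s(z, β i) := by
    intro i hne hi hiZ z hz
    obtain ⟨f, hf⟩ := hcomp z (hL.sub hz) (β i) (hL.mem i) (fun h => hi (h ▸ hz))
    refine ⟨f, hown f z i hf ?_ ?_, hf⟩
    · rintro m rfl
      exact hC m i z hz hi hiZ hf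
    · rw [hr3 (β i) hi (fun h => hne (hL.inj h))]
      have := hrZ z hz
      omega
  have htouch : ∀ i, i ≠ i0 → ∃ e, own e = i ∧ β i ∈ G.ends e := by
    intro i hne
    rcases hstar i with h | ⟨h, h'⟩
    · exact ⟨t i, h1 i, h⟩
    · obtain ⟨f, hf, hf'⟩ := hconn i hne h h' a ha
      exact ⟨f, hf, by rw [hf']; simp⟩
  -- edges to `β i0`
  have hu0 : ∀ i, β i ∈ Z → ∃ e, own e = i ∧ β i0 ∈ G.ends e := by
    intro i hi
    obtain ⟨f, hf⟩ := hcomp (β i) (hL.mem i) (β i0) (hL.mem i0) (fun h => hi0 (h ▸ hi))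
    refine ⟨f, hown f (β i0) i (by rw [hf, Sym2.eq_swap]) ?_ ?_, by rw [hf]; simp⟩
    · rintro m rfl
      exact hC m i0 _ hi hi0 hi0Z hf
    · rw [hr0]
      have := hrp (β i) (fun h => hi0 (h ▸ hi))
      omega
  have hinc0 : ∀ i, i ≠ i0 → ∃ f, own f = i ∧ (a ∈ G.ends f ∨ b ∈ G.ends f) := by
    intro i hne
    by_cases hwa : β i = a
    · obtain ⟨e, he, h⟩ := htouch i hne
      exact ⟨e, he, Or.inl (hwa ▸ h)⟩
    by_cases hwb : β i = b
    · obtain ⟨e, he, h⟩ := htouch i hne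
      exact ⟨e, he, Or.inr (hwb ▸ h)⟩
    obtain ⟨e, he⟩ := hcomp a (hL.sub ha) (β i) (hL.mem i) (Ne.symm hwa)
    obtain ⟨f, hf⟩ := hcomp b (hL.sub hb) (β i) (hL.mem i) (Ne.symm hwb)
    by_cases hwZ : β i ∈ Z
    · have hr2 := hrZ2 _ hwZ hwa hwb
      by_cases hfe : ∀ m, t m ≠ e
      · refine ⟨e, hown e a i he hfe ?_, Or.inl (by rw [he]; simp)⟩
        have := hrab a (Or.inl rfl); omega
      by_cases hff : ∀ m, t m ≠ f
      · refine ⟨f, hown f b i hf hff ?_, Or.inr (by rw [hf]; simp)⟩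
        have := hrab b (Or.inr rfl); omega
      push Not at hfe hff
      obtain ⟨m, rfl⟩ := hfe
      obtain ⟨m', rfl⟩ := hff
      rcases hD _ hwZ hwa hwb m m' (by rw [he, Sym2.eq_swap]) (by rw [hf, Sym2.eq_swap]) with h | h
      · exact ⟨t m, by rw [h1]; exact hL.inj h, Or.inl (by rw [he]; simp)⟩
      · exact ⟨t m', by rw [h1]; exact hL.inj h, Or.inr (by rw [hf]; simp)⟩
    · have hr2 := hr3 _ hwZ (fun h => hne (hL.inj h))
      refine ⟨e, ?_, Or.inl (by rw [he]; simp)⟩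
      by_cases hfe : ∀ m, t m ≠ e
      · refine hown e a i he hfe ?_
        have := hrab a (Or.inl rfl); omega
      push Not at hfe
      obtain ⟨m, rfl⟩ := hfe
      rw [h1]
      rcases hstar m with h | ⟨h, h'⟩
      · have h5 := h
        rw [he, Sym2.mem_iff] at h
        rcases h with h | h
        · exact absurd ((hL.hA m (h ▸ ha)).1 (β i) (by rw [he]; simp)) hwZ
        · exact hL.inj h
      · exact absurd (h' (β i) (by rw [he]; simp)) hwZ
  have hinc0' : ∀ i, i ≠ i0 → ∃ e, own e = i0 ∧ ∃ f, own f = i ∧ G.Inc e f := by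
    intro i hne
    obtain ⟨f, hf, h⟩ := hinc0 i hne
    refine ⟨t i0, h1 i0, f, hf, ?_⟩
    rcases h with h | h
    · exact ⟨a, by rw [hab]; simp, h⟩
    · exact ⟨b, by rw [hab]; simp, h⟩
  refine ⟨fun i => {e | own e = i}, h1, fun i => ?_, fun i j hij => ?_, fun i j hij => ?_⟩
  · rcases hstar i with h | ⟨h, h'⟩
    · refine kconn_hub (f := t i) (h1 i) ?_
      rintro e rfl
      rcases h2 e with ⟨m, rfl⟩ | h3
      · rw [h1]; exact Inc.refl _ _
      · exact ⟨_, h3.1, h⟩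
    · by_cases hi : i = i0
      · subst hi
        have : {e | own e = i} = {t i} := by
          ext e
          simp only [Set.mem_ofPred_eq, Set.mem_singleton_iff]
          constructor
          · rintro rfl
            rcases h2 e with ⟨m, rfl⟩ | ⟨h3, h4⟩
            · rw [h1]
            · exfalso
              obtain ⟨y, hy, he⟩ := G.ends_of_mem h3
              have h5 := h4 y (by rw [he]; simp)
              have h6 := hrp y hy.symm
              omega
          · rintro rfl
            exact h1 i
        change KConn G.Inc {e | own e = i}
        rw [this]
        exact KConn.singleton _ _
      · obtain ⟨z, hz⟩ := G.exists_end (t i)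
        obtain ⟨f, hf, hf'⟩ := hconn i hi h h' z (h' z hz)
        refine kconn_hub (f := f) hf ?_
        rintro e rfl
        rcases h2 e with ⟨m, rfl⟩ | h3
        · rw [h1] at hz
          exact ⟨z, hz, by rw [hf']; simp⟩
        · exact ⟨_, h3.1, by rw [hf']; simp⟩
  · rw [Set.disjoint_left]
    rintro e rfl h
    exact hij h
  · by_cases hi : i = i0
    · subst hi
      obtain ⟨e, he, f, hf, h⟩ := hinc0' j (Ne.symm hij)
      exact ⟨e, he, f, hf, h⟩
    by_cases hj : j = i0
    · subst hj
      obtain ⟨e, he, f, hf, h⟩ := hinc0' i hij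
      exact ⟨f, hf, e, he, h.symm⟩
    obtain ⟨e, he⟩ := hcomp _ (hL.mem i) _ (hL.mem j) (fun h => hij (hL.inj h))
    have key : β (own e) ∈ G.ends e → ∃ e, own e = i ∧ ∃ f, own f = j ∧ G.Inc e f := by
      intro h
      rw [he, Sym2.mem_iff] at h
      rcases h with h | h
      · obtain ⟨f, hf, hf'⟩ := htouch j hj
        exact ⟨e, hL.inj h, f, hf, β j, by rw [he]; simp, hf'⟩
      · obtain ⟨f, hf, hf'⟩ := htouch i hi
        exact ⟨f, hf, e, hL.inj h, β i, hf', by rw [he]; simp⟩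
    have : ∃ e, own e = i ∧ ∃ f, own f = j ∧ G.Inc e f := by
      rcases h2 e with ⟨m, rfl⟩ | ⟨h3, -⟩
      · rcases hstar m with h | ⟨h, h'⟩
        · exact key (by rw [h1]; exact h)
        · obtain ⟨f, hf, hf'⟩ := hu0 i (h' _ (by rw [he]; simp))
          obtain ⟨g, hg, hg'⟩ := hu0 j (h' _ (by rw [he]; simp))
          exact ⟨f, hf, g, hg, _, hf', hg'⟩
      · exact key h3
    obtain ⟨e, he, f, hf, h⟩ := this
    exact ⟨e, he, f, hf, h⟩

theorem good_stepB {V E K : Type*} [Fintype K] {G : Multigraph V E} {t : K → E} {W Z : Finset V}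
    (ht : Function.Injective t) (hends : Function.Injective G.ends)
    (hW : ∀ e, ∀ v ∈ G.ends e, v ∈ W)
    (hcomp : ∀ v ∈ W, ∀ w ∈ W, v ≠ w → ∃ e, G.ends e = s(v, w))
    (i0 : K) (a b : V) (hab : G.ends (t i0) = s(a, b)) (ha : a ∈ Z) (hb : b ∈ Z) (n : ℕ) :
    ∀ β : K → V, G.Lab t W Z β → β i0 ∉ Z →
    (¬ ∃ z m m', β m = a ∧ G.ends (t m) = s(z, a) ∧ β m' = b ∧ G.ends (t m') = s(z, b)) →
    Fintype.card K ≤ Set.ncard {i | β i ∈ Z ∧ β i ≠ a ∧ β i ≠ b ∧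
      (a ∈ G.ends (t i) ∨ b ∈ G.ends (t i))} + n → G.Good t := by
  classical
  induction n with
  | zero =>
    intro β hL hi0 hA hcard
    exfalso
    have h1 : {i | β i ∈ Z ∧ β i ≠ a ∧ β i ≠ b ∧ (a ∈ G.ends (t i) ∨ b ∈ G.ends (t i))} ⊂
        Set.univ := by
      refine Set.ssubset_univ_iff.mpr (fun h => hi0 ?_)
      have : i0 ∈ (Set.univ : Set K) := Set.mem_univ _
      rw [← h] at this
      exact this.1
    have h2 := Set.ncard_lt_ncard h1 (Set.toFinite _)
    rw [Set.ncard_univ, Nat.card_eq_fintype_card] at h2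
    omega
  | succ n ih =>
    intro β hL hi0 hA hcard
    by_cases hD : ∀ w ∈ Z, w ≠ a → w ≠ b → ∀ m m', G.ends (t m) = s(w, a) →
        G.ends (t m') = s(w, b) → β m = w ∨ β m' = w
    · exact good_lab ht hL hW hcomp i0 a b hab ha hb hi0 hD
    push Not at hD
    obtain ⟨w, hw, hwa, hwb, m, m', hm, hm', hmw, hmw'⟩ := hD
    obtain ⟨j, hj⟩ := hL.surj w (hL.sub hw)
    have hjZ : β j ∈ Z := hj ▸ hw
    have hwj : w ∈ G.ends (t j) := hj ▸ (hL.hA j hjZ).2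
    have hja : a ∉ G.ends (t j) := by
      intro h
      have h1 := (Sym2.mem_and_mem_iff hwa).mp ⟨hwj, h⟩
      have := ht (hends (h1.trans hm.symm))
      exact hmw (this ▸ hj)
    have hjb : b ∉ G.ends (t j) := by
      intro h
      have h1 := (Sym2.mem_and_mem_iff hwb).mp ⟨hwj, h⟩
      have := ht (hends (h1.trans hm'.symm))
      exact hmw' (this ▸ hj)
    have hji0 : i0 ≠ j := fun h => hi0 (h ▸ hjZ)
    have step : ∀ m, β m ∉ Z → (∀ v ∈ G.ends (t m), v ∈ Z) → w ∈ G.ends (t m) →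
        (a ∈ G.ends (t m) ∨ b ∈ G.ends (t m)) → G.Good t := by
      intro m hmZ hmsub hwm hmab
      have hmi0 : i0 ≠ m := by
        rintro rfl
        rw [hab, Sym2.mem_iff] at hwm
        rcases hwm with h | h
        · exact hwa h
        · exact hwb h
      have hmj : m ≠ j := fun h => hmZ (h ▸ hjZ)
      have hother : ∀ x, x ≠ m → x ≠ j → β (Equiv.swap m j x) = β x := fun x h h' => by
        rw [Equiv.swap_apply_of_ne_of_ne h h']
      have hback : ∀ x v, v ∈ Z → v ≠ w → β (Equiv.swap m j x) = v → β x = v := by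
        intro x v hv hvw h
        by_cases h1 : x = m
        · subst h1
          rw [Equiv.swap_apply_left, hj] at h
          exact absurd h.symm hvw
        by_cases h2 : x = j
        · subst h2
          rw [Equiv.swap_apply_right] at h
          exact absurd (h ▸ hv) hmZ
        rwa [hother x h1 h2] at h
      refine ih _ (hL.swap hmZ hmsub hjZ (hj ▸ hwm)) ?_ ?_ ?_
      · rw [hother i0 hmi0 hji0]
        exact hi0
      · rintro ⟨z, x, x', h1, h2, h3, h4⟩
        exact hA ⟨z, x, x', hback x a ha (Ne.symm hwa) h1, h2, hback x' b hb (Ne.symm hwb) h3, h4⟩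
      · set S := {i | β i ∈ Z ∧ β i ≠ a ∧ β i ≠ b ∧ (a ∈ G.ends (t i) ∨ b ∈ G.ends (t i))} with hS
        have h1 : m ∉ S := fun h => hmZ h.1
        have h2 : insert m S ⊆ {i | β (Equiv.swap m j i) ∈ Z ∧ β (Equiv.swap m j i) ≠ a ∧
            β (Equiv.swap m j i) ≠ b ∧ (a ∈ G.ends (t i) ∨ b ∈ G.ends (t i))} := by
          intro x hx
          rcases Set.mem_insert_iff.mp hx with rfl | hx
          · refine ⟨?_, ?_, ?_, hmab⟩
            · rw [Equiv.swap_apply_left]; exact hjZ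
            · rw [Equiv.swap_apply_left, hj]; exact hwa
            · rw [Equiv.swap_apply_left, hj]; exact hwb
          · have hxm : x ≠ m := fun h => h1 (h ▸ hx)
            have hxj : x ≠ j := by
              rintro rfl
              rcases hx.2.2.2 with h | h
              · exact hja h
              · exact hjb h
            have := hother x hxm hxj
            refine ⟨?_, ?_, ?_, hx.2.2.2⟩
            · rw [this]; exact hx.1
            · rw [this]; exact hx.2.1
            · rw [this]; exact hx.2.2.1
        have h3 := Set.ncard_le_ncard h2 (Set.toFinite _)
        rw [Set.ncard_insert_of_notMem h1 (Set.toFinite _)] at h3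
        omega
    by_cases hmZ : β m ∈ Z
    · by_cases hmZ' : β m' ∈ Z
      · exfalso
        apply hA
        refine ⟨w, m, m', ?_, hm, ?_, hm'⟩
        · have := (hL.hA m hmZ).2
          rw [hm, Sym2.mem_iff] at this
          exact this.resolve_left hmw
        · have := (hL.hA m' hmZ').2
          rw [hm', Sym2.mem_iff] at this
          exact this.resolve_left hmw'
      · refine step m' hmZ' ?_ (by rw [hm']; simp) (Or.inr (by rw [hm']; simp))
        intro v hv
        rw [hm', Sym2.mem_iff] at hv
        rcases hv with rfl | rfl <;> assumption
    · refine step m hmZ ?_ (by rw [hm]; simp) (Or.inl (by rw [hm]; simp))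
      intro v hv
      rw [hm, Sym2.mem_iff] at hv
      rcases hv with rfl | rfl <;> assumption

theorem good_stepA {V E K : Type*} [Fintype K] {G : Multigraph V E} {t : K → E} {W Z : Finset V}
    (ht : Function.Injective t) (hends : Function.Injective G.ends)
    (hW : ∀ e, ∀ v ∈ G.ends e, v ∈ W)
    (hcomp : ∀ v ∈ W, ∀ w ∈ W, v ≠ w → ∃ e, G.ends e = s(v, w))
    (i0 : K) {β : K → V} (hL : G.Lab t W Z β) (hi0 : β i0 ∉ Z)
    (hi0Z : ∀ v ∈ G.ends (t i0), v ∈ Z) : G.Good t := by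
  classical
  obtain ⟨a, b, hne, hab⟩ := G.exists_ends (t i0)
  have ha : a ∈ Z := hi0Z a (by rw [hab]; simp)
  have hb : b ∈ Z := hi0Z b (by rw [hab]; simp)
  by_cases hA : ∃ z m m', β m = a ∧ G.ends (t m) = s(z, a) ∧ β m' = b ∧ G.ends (t m') = s(z, b)
  · obtain ⟨z, m, m', h1, h2, h3, h4⟩ := hA
    have hmZ : β m ∈ Z := h1 ▸ ha
    have hz : z ∈ Z := (hL.hA m hmZ).1 z (by rw [h2]; simp)
    have hL' := hL.swap hi0 hi0Z hmZ (by rw [h1, hab]; simp)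
    refine good_stepB ht hends hW hcomp m z a h2 hz ha (Fintype.card K) _ hL' ?_ ?_ (by omega)
    · simp only [Equiv.swap_apply_right]
      exact hi0
    · rintro ⟨z', x, x', h5, h6, h7, h8⟩
      have hx' : x' = i0 := by
        apply hL'.inj
        simp only [Equiv.swap_apply_left]
        rw [h7, h1]
      subst hx'
      rw [hab] at h8
      have hz'b : z' = b := by
        rcases Sym2.eq_iff.mp h8 with ⟨h, h'⟩ | ⟨h, h'⟩
        · exact absurd h'.symm hne
        · exact h'.symm
      subst hz'b
      have hxm : x = m' := ht (hends (by rw [h6, h4, Sym2.eq_swap]))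
      subst hxm
      have hx1 : x ≠ x' := by
        rintro rfl
        exact hi0 (h3 ▸ hb)
      have hx2 : x ≠ m := by
        rintro rfl
        exact hne (h1.symm.trans h3)
      rw [Equiv.swap_apply_of_ne_of_ne hx1 hx2, h3] at h5
      subst h5
      exact G.not_isDiag (t x) (by rw [h4]; simp)
  · exact good_stepB ht hends hW hcomp i0 a b hab ha hb (Fintype.card K) β hL hi0 hA (by omega)

theorem good_complete {V E K : Type*} [Fintype K] {G : Multigraph V E} {t : K → E} {W : Finset V}
    (ht : Function.Injective t) (hends : Function.Injective G.ends)
    (hW : ∀ e, ∀ v ∈ G.ends e, v ∈ W)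
    (hcomp : ∀ v ∈ W, ∀ w ∈ W, v ≠ w → ∃ e, G.ends e = s(v, w))
    (hcard : W.card = Fintype.card K) : G.Good t := by
  obtain ⟨Z, β, hL⟩ := exists_lab G t W hcard hW
  by_cases h : ∀ i, β i ∈ G.ends (t i)
  · exact good_star ht hL hW hcomp h
  · push Not at h
    obtain ⟨i0, hi0⟩ := h
    have h1 : β i0 ∉ Z := fun h => hi0 (hL.hA i0 h).2
    exact good_stepA ht hends hW hcomp i0 hL h1 ((hL.hB i0 h1).resolve_left hi0)

theorem good_of_kempe {V K : Type*} [Fintype V] [Fintype K] (n : ℕ) :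
    ∀ (E : Type u) [Fintype E], Fintype.card E = n →
      ∀ (G : Multigraph V E) (c : E → K) (t : K → E), G.Kempe c t → G.Good t := by
  induction n using Nat.strong_induction_on with
  | _ n ih =>
    intro E _ hE G c t hK
    have ht : Function.Injective t := fun i j hij => by
      rw [← hK.ht i, ← hK.ht j, hij]
    rcases subsingleton_or_nontrivial K with hs | hnt
    · refine ⟨fun i => {t i}, fun i => rfl, fun i => KConn.singleton _ _, ?_, ?_⟩
      · intro i j hij
        exact absurd (Subsingleton.elim i j) hij
      · intro i j hij
        exact absurd (Subsingleton.elim i j) hij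
    by_cases hf : ∃ v, G.Full c v
    · obtain ⟨v, hv⟩ := hf
      refine full_step hK hv hnt ?_
      intro E' _ hE' G' c' t' hK'
      exact ih _ (hE ▸ hE') E' rfl G' c' t' hK'
    push Not at hf
    by_cases h1 : ∃ i, ∀ f, c f = i → f = t i
    · obtain ⟨i, hi⟩ := h1
      exact singles hK hf i hi
    push Not at h1
    have h2 : ∀ e, ∃ f, c f = c e ∧ f ≠ e := by
      intro e
      by_cases he : e = t (c e)
      · obtain ⟨f, hf1, hf2⟩ := h1 (c e)
        exact ⟨f, hf1, by rw [he]; exact hf2⟩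
      · exact ⟨t (c e), hK.ht _, Ne.symm he⟩
    obtain ⟨W, hW1, hW2, hW3⟩ := complete_of hK hf h2
    exact good_complete ht (ends_inj hK h2) hW2 hW3 hW1

end Multigraph

/-- Main theorem (Theorem 2): if the edge set of a graph `H` is partitioned into
matchings any two of which have connected union, then for every transversal `T`
of the partition there is a family of connected, pairwise disjoint, pairwise
incident edge sets traversed by `T`. -/
theorem main_theorem_line_graph_version {V E : Type*} [Fintype V] [Fintype E]
    (G : Multigraph V E) (𝔠 : Set (Set E)) (hpart : IsEdgePartition 𝔠)
    (hmatch : ∀ M ∈ 𝔠, G.Matching M)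
    (hconn : ∀ M ∈ 𝔠, ∀ N ∈ 𝔠, M ≠ N → G.EdgesConnected (M ∪ N))
    (T : Set E) (hT : T ⊆ ⋃₀ 𝔠) (hT1 : ∀ M ∈ 𝔠, ∃! e, e ∈ T ∧ e ∈ M) :
    ∃ 𝔎 : Set (Set E),
      (∀ A ∈ 𝔎, G.EdgesConnected A) ∧
      (∀ A ∈ 𝔎, ∀ B ∈ 𝔎, A ≠ B → Disjoint A B) ∧
      (∀ A ∈ 𝔎, ∀ B ∈ 𝔎, A ≠ B → G.EdgesIncident A B) ∧
      TraversedBy 𝔎 T := by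
  classical
  obtain ⟨hne, hcov, hdis⟩ := hpart
  have hc : ∀ e : E, ∃ M : 𝔠, e ∈ (M : Set E) := by
    intro e
    have : e ∈ ⋃₀ 𝔠 := by rw [hcov]; trivial
    obtain ⟨M, hM, he⟩ := this
    exact ⟨⟨M, hM⟩, he⟩
  choose c hcm using hc
  have hcu : ∀ e (M : 𝔠), e ∈ (M : Set E) → c e = M := by
    intro e M he
    by_contra h
    have := hdis _ (c e).2 _ M.2 (fun h' => h (Subtype.ext h'))
    exact Set.disjoint_left.mp this (hcm e) he
  have hiff : ∀ e (M : 𝔠), c e = M ↔ e ∈ (M : Set E) :=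
    fun e M => ⟨fun h => h ▸ hcm e, hcu e M⟩
  have ht : ∀ M : 𝔠, ∃ e, e ∈ T ∧ e ∈ (M : Set E) := fun M => (hT1 M M.2).exists
  choose t htT htM using ht
  have : Fintype 𝔠 := Fintype.ofFinite _
  have hK : G.Kempe c t := by
    refine ⟨?_, ?_, ?_⟩
    · intro e f hef hinc
      by_contra hne'
      exact hmatch _ (c e).2 e (hcm e) f (by rw [hef]; exact hcm f) hne' hinc
    · intro i j hij e f he hf
      have h := (hconn _ i.2 _ j.2 (fun h => hij (Subtype.ext h))).2
      simp only [hiff] at he hf ⊢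
      exact h e he f hf
    · intro i
      exact hcu _ _ (htM i)
  obtain ⟨F, hF1, hF2, hF3, hF4⟩ := Multigraph.good_of_kempe _ E rfl G c t hK
  have hTt : ∀ e ∈ T, e = t (c e) := fun e he =>
    (hT1 _ (c e).2).unique ⟨he, hcm e⟩ ⟨htT _, htM _⟩
  refine ⟨Set.range F, ?_, ?_, ?_, ?_, ?_⟩
  · rintro _ ⟨i, rfl⟩
    exact ⟨⟨t i, hF1 i⟩, hF2 i⟩
  · rintro _ ⟨i, rfl⟩ _ ⟨j, rfl⟩ h
    exact hF3 i j (fun h' => h (h' ▸ rfl))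
  · rintro _ ⟨i, rfl⟩ _ ⟨j, rfl⟩ h
    exact hF4 i j (fun h' => h (h' ▸ rfl))
  · rintro _ ⟨i, rfl⟩
    refine ⟨t i, ⟨htT i, hF1 i⟩, ?_⟩
    rintro e ⟨heT, heF⟩
    have h1 := hTt e heT
    by_cases h : c e = i
    · rw [h1, h]
    · exfalso
      have h2 := hF1 (c e)
      rw [← h1] at h2
      exact Set.disjoint_left.mp (hF3 _ _ h) h2 heF
  · intro e he
    have h2 := hF1 (c e)
    rw [← hTt e he] at h2
    exact ⟨F (c e), ⟨_, rfl⟩, h2⟩
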